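/- Fix δ ∈ (0,1). Then there exist η > 0 and C > 0 such that for all P ≥ 2 and all R with 1 ≤ R ≤ P^η one has ∫_𝔐 |f_δ(α;P)|²·|g_δ(α;P,R)|⁶ dα ≤ C·P⁴. -/

import Mathlib

open MeasureTheory
open scoped Classical

/-- `e(α) = exp(2πiα)`. -/
noncomputable def eC (α : ℝ) : ℂ := Complex.exp (2 * Real.pi * Complex.I * α)

/-- An integer is `R`-smooth if all of its prime divisors are at most `R`. -/
def IsSmooth (R : ℝ) (x : ℤ) : Prop := ∀ p : ℕ, p.Prime → (p : ℤ) ∣ x → (p : ℝ) ≤ R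

/-- The smooth quartic Weyl sum `g_δ(α; P, R) = ∑_{x ∈ 𝒜(P,R), δP < x ≤ P} e(αx⁴)`. -/
noncomputable def gW (δ P R α : ℝ) : ℂ :=
  ∑ x ∈ Finset.Icc (⌊δ * P⌋ + 1) ⌊P⌋,
    if IsSmooth R x then eC (α * (x : ℝ) ^ 4) else 0

/-- The classical quartic Weyl sum `f_δ(α; P) = ∑_{δP < x ≤ P} e(αx⁴)`. -/
noncomputable def fW (δ P α : ℝ) : ℂ :=
  ∑ x ∈ Finset.Icc (⌊δ * P⌋ + 1) ⌊P⌋, eC (α * (x : ℝ) ^ 4)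

/-- The major arcs `𝔐`: the union of `{α ∈ [0,1) : |qα − a| ≤ P^{−7/2}}` over coprime
`a, q` with `0 ≤ a ≤ q ≤ P^{1/2}`. -/
def MajM (P : ℝ) : Set ℝ :=
  {α ∈ Set.Ico (0 : ℝ) 1 | ∃ a q : ℕ, a ≤ q ∧ (q : ℝ) ≤ P ^ ((1 : ℝ) / 2) ∧
    Nat.Coprime a q ∧ |(q : ℝ) * α - (a : ℝ)| ≤ P ^ (-(7 : ℝ) / 2)}

/-- `Ψ_𝔪(n) = ∫_𝔪 |f(α)|²|g(α)|⁶ e(−nα) dα`, where `𝔪 = [0,1) ∖ 𝔐`. -/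
noncomputable def PsiMinor (δ P R : ℝ) (n : ℤ) : ℂ :=
  ∫ α in Set.Ico (0 : ℝ) 1 \ MajM P,
    ((‖fW δ P α‖ ^ 2 * ‖gW δ P R α‖ ^ 6 : ℝ) : ℂ) * eC (-((n : ℝ) * α))

/-- Parseval for exponential sums over `ZMod q`. -/
lemma parseval_gen {q : ℕ} [NeZero q] {ι : Type*} (s : Finset ι) (φ : ι → ZMod q) (C : ι → ℂ) :
    ((∑ a : ZMod q, ‖∑ i ∈ s, C i * ZMod.stdAddChar (a * φ i)‖ ^ 2 : ℝ) : ℂ) =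
      q * ∑ i ∈ s, ∑ j ∈ s, if φ i = φ j then C i * (starRingEnd ℂ) (C j) else 0 := by
  push_cast
  have h1 : ∀ a : ZMod q, ((‖∑ i ∈ s, C i * ZMod.stdAddChar (a * φ i)‖ : ℂ)) ^ 2 =
      ∑ i ∈ s, ∑ j ∈ s, C i * (starRingEnd ℂ) (C j) * ZMod.stdAddChar (a * (φ i - φ j)) := by
    intro a
    rw [← Complex.mul_conj', map_sum, Finset.sum_mul_sum]
    refine Finset.sum_congr rfl fun i _ => Finset.sum_congr rfl fun j _ => ?_
    rw [map_mul (starRingEnd ℂ), ← AddChar.map_neg_eq_conj, mul_sub, sub_eq_add_neg, AddChar.map_add_eq_mul]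
    ring
  simp_rw [h1]
  rw [Finset.sum_comm, Finset.mul_sum]
  refine Finset.sum_congr rfl fun i _ => ?_
  rw [Finset.sum_comm, Finset.mul_sum]
  refine Finset.sum_congr rfl fun j _ => ?_
  rw [← Finset.mul_sum, AddChar.sum_mulShift _ (ZMod.isPrimitive_stdAddChar q)]
  by_cases h : φ i = φ j
  · simp [h, mul_comm]
  · simp [h, sub_eq_zero]

lemma majorant_gen {q : ℕ} [NeZero q] {ι : Type*} (s : Finset ι) (φ : ι → ZMod q) (C : ι → ℂ)
    (hC : ∀ i ∈ s, ‖C i‖ ≤ 1) :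
    (∑ a : ZMod q, ‖∑ i ∈ s, C i * ZMod.stdAddChar (a * φ i)‖ ^ 2) ≤
    (∑ a : ZMod q, ‖∑ i ∈ s, (ZMod.stdAddChar (a * φ i) : ℂ)‖ ^ 2) := by
  have h1 := parseval_gen s φ C
  have h2 := parseval_gen s φ (fun _ => (1 : ℂ))
  simp only [one_mul, map_one, mul_one] at h2
  have h3 : (∑ a : ZMod q, ‖∑ i ∈ s, (ZMod.stdAddChar (a * φ i) : ℂ)‖ ^ 2) =
      q * ∑ i ∈ s, ∑ j ∈ s, if φ i = φ j then (1 : ℝ) else 0 := by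
    apply Complex.ofReal_injective
    rw [h2]
    push_cast
    congr 1
    refine Finset.sum_congr rfl fun i _ => Finset.sum_congr rfl fun j _ => ?_
    split_ifs <;> simp
  rw [h3]
  have h4 : (∑ a : ZMod q, ‖∑ i ∈ s, C i * ZMod.stdAddChar (a * φ i)‖ ^ 2) =
      ‖((∑ a : ZMod q, ‖∑ i ∈ s, C i * ZMod.stdAddChar (a * φ i)‖ ^ 2 : ℝ) : ℂ)‖ := by
    rw [Complex.norm_real, Real.norm_of_nonneg (by positivity)]
  rw [h4, h1, norm_mul, Complex.norm_natCast]
  gcongr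
  refine (norm_sum_le _ _).trans (Finset.sum_le_sum fun i hi => ?_)
  refine (norm_sum_le _ _).trans (Finset.sum_le_sum fun j hj => ?_)
  split_ifs
  · rw [norm_mul, RCLike.norm_conj]
    exact mul_le_one₀ (hC i hi) (norm_nonneg _) (hC j hj)
  · simp

/-- complete quartic sum -/
noncomputable def Sq (q : ℕ) [NeZero q] (a : ZMod q) : ℂ := ∑ y : ZMod q, ZMod.stdAddChar (a * y ^ 4)

/-- number of pairs with equal fourth powers -/
noncomputable def Mc (A : Type) [CommRing A] : ℕ := Nat.card {p : A × A // p.1 ^ 4 = p.2 ^ 4}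
noncomputable def rc (A : Type) [CommRing A] : ℕ := Nat.card {u : Aˣ // u ^ 4 = 1}

lemma sum_Sq_sq (q : ℕ) [NeZero q] : ∑ a : ZMod q, ‖Sq q a‖ ^ 2 = q * Mc (ZMod q) := by
  have h2 := parseval_gen (q := q) Finset.univ (fun y : ZMod q => y ^ 4) (fun _ => (1 : ℂ))
  simp only [one_mul, map_one, mul_one] at h2
  apply Complex.ofReal_injective
  unfold Sq
  rw [h2]
  push_cast
  congr 1
  rw [← Finset.sum_product']
  simp only [Finset.univ_product_univ]
  rw [Finset.sum_boole]
  unfold Mc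
  rw [Nat.card_eq_fintype_card, Fintype.card_subtype]

lemma Sq_unit (q : ℕ) [NeZero q] (a : ZMod q) (u : (ZMod q)ˣ) : Sq q (a * u ^ 4) = Sq q a := by
  unfold Sq
  refine Fintype.sum_equiv (Units.mulLeft u) _ _ fun y => ?_
  simp only [Units.mulLeft_apply]
  congr 1
  ring

lemma Sq_bound (q : ℕ) [NeZero q] (a : (ZMod q)ˣ) :
    (q.totient : ℝ) * ‖Sq q a‖ ^ 2 ≤ rc (ZMod q) * (q * Mc (ZMod q)) := by
  rw [← sum_Sq_sq]
  have h1 : (q.totient : ℝ) * ‖Sq q a‖ ^ 2 = ∑ u : (ZMod q)ˣ, ‖Sq q (a * u ^ 4)‖ ^ 2 := by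
    simp_rw [Sq_unit]
    rw [Finset.sum_const, Finset.card_univ, ZMod.card_units_eq_totient, nsmul_eq_mul]
  rw [h1]
  rw [← Finset.sum_fiberwise (Finset.univ) (fun u : (ZMod q)ˣ => (a * u ^ 4 : ZMod q)), Finset.mul_sum]
  refine Finset.sum_le_sum fun b _ => ?_
  have h2 : ∀ u ∈ Finset.univ.filter (fun u : (ZMod q)ˣ => (a * u ^ 4 : ZMod q) = b),
      ‖Sq q (a * u ^ 4)‖ ^ 2 = ‖Sq q b‖ ^ 2 := by
    intro u hu
    rw [(Finset.mem_filter.1 hu).2]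
  rw [Finset.sum_congr rfl h2, Finset.sum_const, nsmul_eq_mul]
  gcongr
  unfold rc
  rw [Nat.card_eq_fintype_card, Fintype.card_subtype]
  rcases Finset.eq_empty_or_nonempty (Finset.univ.filter (fun u : (ZMod q)ˣ => (a * u ^ 4 : ZMod q) = b)) with h | ⟨v, hv⟩
  · rw [h]; simp
  · refine Finset.card_le_card_of_injOn (fun u => u * v⁻¹) ?_ ?_
    · intro u hu
      have hu' := (Finset.mem_filter.1 hu).2
      have hv' := (Finset.mem_filter.1 hv).2
      have : a * u ^ 4 = a * v ^ 4 := by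
        apply Units.ext
        push_cast
        rw [hu', hv']
      have h5 := mul_left_cancel this
      simp [mul_pow, h5]
    · intro u _ w _ h
      simpa using h

lemma rc_two (k : ℕ) : rc (ZMod (2 ^ k)) ≤ 8 := by
  have : NeZero (2 ^ k) := ⟨by positivity⟩
  unfold rc
  rw [Nat.card_eq_fintype_card]
  rcases lt_or_ge k 3 with hk | hk
  · have h1 : Fintype.card {u : (ZMod (2 ^ k))ˣ // u ^ 4 = 1} ≤ Fintype.card (ZMod (2 ^ k)) :=
      Fintype.card_le_of_injective (fun u => ((u : (ZMod (2 ^ k))ˣ) : ZMod (2 ^ k)))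
        (fun u v h => Subtype.ext (Units.ext h))
    refine h1.trans ?_
    rw [ZMod.card]
    interval_cases k <;> norm_num
  · obtain ⟨j, rfl⟩ : ∃ j, k = j + 3 := ⟨k - 3, by omega⟩
    have key : ∀ u : (ZMod (2 ^ (j + 3)))ˣ, u ^ 4 = 1 →
        (u : ZMod (2 ^ (j + 3))).val % 2 ^ (j + 1) = 1 ∨
        (u : ZMod (2 ^ (j + 3))).val % 2 ^ (j + 1) = 2 ^ (j + 1) - 1 := by
      intro u hu
      set x := (u : ZMod (2 ^ (j + 3))).val with hx
      have hcop : x.Coprime (2 ^ (j + 3)) := ZMod.val_coe_unit_coprime u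
      have hodd : Odd x := by
        rw [← Nat.coprime_two_right]
        exact Nat.Coprime.coprime_dvd_right (dvd_pow_self 2 (by omega)) hcop
      have h4 : ((x ^ 4 : ℕ) : ZMod (2 ^ (j + 3))) = ((1 : ℕ) : ZMod (2 ^ (j + 3))) := by
        push_cast
        rw [hx, ZMod.natCast_zmod_val, ← Units.val_pow_eq_pow_val, hu]
        simp
      rw [ZMod.natCast_eq_natCast_iff] at h4
      obtain ⟨y, hy⟩ := hodd
      have h5 : 2 ^ (j + 3) ∣ x ^ 4 - 1 := by
        exact (Nat.modEq_iff_dvd' (Nat.one_le_pow _ _ (by omega))).1 h4.symm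
      have h6 : x ^ 4 - 1 = 8 * ((y * (y + 1)) * (2 * (y * (y + 1)) + 1)) := by
        rw [hy]
        have : (2 * y + 1) ^ 4 = 8 * ((y * (y + 1)) * (2 * (y * (y + 1)) + 1)) + 1 := by ring
        omega
      rw [h6, show 2 ^ (j + 3) = 8 * 2 ^ j by ring] at h5
      have h7 := Nat.dvd_of_mul_dvd_mul_left (by norm_num) h5
      have h8 : 2 ^ j ∣ y * (y + 1) := by
        refine Nat.Coprime.dvd_of_dvd_mul_right ?_ h7
        apply Nat.Coprime.pow_left
        rw [Nat.coprime_two_left]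
        exact ⟨_, rfl⟩
      have hpos : 0 < 2 ^ j := by positivity
      have hp1 : 2 ^ (j + 1) = 2 * 2 ^ j := by ring
      rcases Nat.even_or_odd y with he | ho
      · left
        have h9 : 2 ^ j ∣ y := by
          refine Nat.Coprime.dvd_of_dvd_mul_right ?_ h8
          apply Nat.Coprime.pow_left
          rw [Nat.coprime_two_left]
          exact he.add_one
        obtain ⟨z, hz⟩ := h9
        rw [hy, hz, hp1, show 2 * (2 ^ j * z) + 1 = 1 + 2 * 2 ^ j * z by ring, Nat.add_mul_mod_self_left]
        exact Nat.mod_eq_of_lt (by omega)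
      · right
        have h9 : 2 ^ j ∣ y + 1 := by
          refine Nat.Coprime.dvd_of_dvd_mul_left ?_ h8
          apply Nat.Coprime.pow_left
          rw [Nat.coprime_two_left]
          exact ho
        obtain ⟨z, hz⟩ := h9
        have hz0 : z ≠ 0 := by rintro rfl; simp at hz
        obtain ⟨w, rfl⟩ := Nat.exists_eq_succ_of_ne_zero hz0
        have : 2 * y + 1 = (2 * 2 ^ j - 1) + 2 * 2 ^ j * w := by
          have : y + 1 = 2 ^ j * w + 2 ^ j := by rw [hz, Nat.succ_eq_add_one]; ring
          have h' : 2 * 2 ^ j * w = 2 * (2 ^ j * w) := by ring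
          omega
        rw [hy, this, hp1, Nat.add_mul_mod_self_left]
        exact Nat.mod_eq_of_lt (by omega)
    have h2 : Fintype.card {u : (ZMod (2 ^ (j + 3)))ˣ // u ^ 4 = 1} ≤ Fintype.card (Fin 4 × Bool) := by
      refine Fintype.card_le_of_injective (fun u =>
        ((⟨(u.1 : ZMod (2 ^ (j + 3))).val / 2 ^ (j + 1), ?_⟩ : Fin 4),
          decide ((u.1 : ZMod (2 ^ (j + 3))).val % 2 ^ (j + 1) = 1))) ?_
      · rw [Nat.div_lt_iff_lt_mul (by positivity)]
        have := ZMod.val_lt (u.1 : ZMod (2 ^ (j + 3)))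
        calc _ < _ := this
          _ = _ := by ring
      · intro u v h
        simp only [Prod.mk.injEq, Fin.mk.injEq, decide_eq_decide] at h
        apply Subtype.ext
        apply Units.ext
        apply ZMod.val_injective
        rw [← Nat.div_add_mod (u.1 : ZMod (2 ^ (j + 3))).val (2 ^ (j + 1)),
          ← Nat.div_add_mod (v.1 : ZMod (2 ^ (j + 3))).val (2 ^ (j + 1)), h.1]
        congr 1
        have hu := key u.1 u.2
        have hv := key v.1 v.2
        have := h.2
        by_cases h1 : (u.1 : ZMod (2 ^ (j + 3))).val % 2 ^ (j + 1) = 1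
        · rw [h1, this.1 h1]
        · rw [hu.resolve_left h1, hv.resolve_left (fun h => h1 (this.2 h))]
    simpa using h2

lemma rc_le (p k : ℕ) (hp : p.Prime) : rc (ZMod (p ^ k)) ≤ 8 := by
  rcases hp.eq_two_or_odd' with rfl | ho
  · exact rc_two k
  · have : NeZero (p ^ k) := ⟨pow_ne_zero _ hp.ne_zero⟩
    have hc : IsCyclic (ZMod (p ^ k))ˣ := by
      rw [ZMod.isCyclic_units_iff]
      rcases Nat.eq_zero_or_pos k with rfl | hk
      · simp
      · right; right; right; right
        exact ⟨p, k, hp, ho, hk, Or.inl rfl⟩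
    unfold rc
    rw [Nat.card_eq_fintype_card, Fintype.card_subtype]
    exact (IsCyclic.card_pow_eq_one_le (by norm_num)).trans (by norm_num)

def MN (q X : ℕ) : ℕ :=
  ((Finset.range X ×ˢ Finset.range X).filter (fun z => (q : ℤ) ∣ (z.1 : ℤ) ^ 4 - (z.2 : ℤ) ^ 4)).card

lemma MN_mul (d m : ℕ) (hd : 0 < d) : MN d (d * m) ≤ m ^ 2 * MN d d := by
  unfold MN
  rw [show m ^ 2 = (Finset.range m ×ˢ Finset.range m).card by simp [sq], ← Finset.card_product]
  refine Finset.card_le_card_of_injOn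
    (fun z => ((z.1 / d, z.2 / d), (z.1 % d, z.2 % d))) ?_ ?_
  · intro z hz
    simp only [Finset.coe_filter, Finset.mem_product, Finset.mem_range, Set.mem_ofPred_eq, Finset.coe_product, Set.mem_prod, Finset.mem_coe, Finset.coe_range, Set.mem_Iio] at hz ⊢
    refine ⟨⟨Nat.div_lt_of_lt_mul hz.1.1, Nat.div_lt_of_lt_mul hz.1.2⟩,
      ⟨Nat.mod_lt _ hd, Nat.mod_lt _ hd⟩, ?_⟩
    have h := hz.2
    rw [← Int.modEq_iff_dvd] at h ⊢
    push_cast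
    exact (((Int.mod_modEq _ _).pow 4).trans h).trans ((Int.mod_modEq _ _).pow 4).symm
  · intro z _ w _ h
    simp only [Prod.mk.injEq] at h
    apply Prod.ext
    · rw [← Nat.div_add_mod z.1 d, ← Nat.div_add_mod w.1 d, h.1.1, h.2.1]
    · rw [← Nat.div_add_mod z.2 d, ← Nat.div_add_mod w.2 d, h.1.2, h.2.2]

lemma MN_le_Mc (q : ℕ) [NeZero q] : MN q q ≤ Mc (ZMod q) := by
  unfold MN Mc
  rw [Nat.card_eq_fintype_card, Fintype.card_subtype]
  refine Finset.card_le_card_of_injOn (fun z => ((z.1 : ZMod q), (z.2 : ZMod q))) ?_ ?_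
  · intro z hz
    simp only [Finset.coe_filter, Finset.mem_product, Finset.mem_range, Set.mem_ofPred_eq, Finset.mem_univ, true_and] at hz ⊢
    have h := hz.2
    rw [← ZMod.intCast_zmod_eq_zero_iff_dvd] at h
    push_cast at h
    exact sub_eq_zero.1 h
  · intro z hz w hw h
    simp only [Finset.coe_filter, Finset.mem_product, Finset.mem_range, Set.mem_ofPred_eq] at hz hw
    simp only [Prod.mk.injEq, ZMod.natCast_eq_natCast_iff'] at h
    rw [Nat.mod_eq_of_lt hz.1.1, Nat.mod_eq_of_lt hz.1.2, Nat.mod_eq_of_lt hw.1.1, Nat.mod_eq_of_lt hw.1.2] at h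
    exact Prod.ext h.1 h.2

lemma Mc_rec (p k : ℕ) (hp : p.Prime) (hk : 1 ≤ k) :
    Mc (ZMod (p ^ k)) ≤ (p ^ k).totient * rc (ZMod (p ^ k)) + MN (p ^ (k - 4)) (p ^ (k - 1)) := by
  have : NeZero (p ^ k) := ⟨pow_ne_zero _ hp.ne_zero⟩
  have : Fact (1 < p ^ k) := ⟨Nat.one_lt_pow (by omega) hp.one_lt⟩
  unfold Mc rc MN
  simp only [Nat.card_eq_fintype_card]
  rw [Fintype.card_subtype, ← Finset.card_filter_add_card_filter_not (fun z : ZMod (p ^ k) × ZMod (p ^ k) => IsUnit z.1)]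
  have hunit : ∀ x : ZMod (p ^ k), ¬ IsUnit x → p ∣ x.val := by
    intro x hx
    by_contra h
    apply hx
    have : x.val.Coprime (p ^ k) := by
      apply Nat.Coprime.pow_right
      exact ((Nat.Prime.coprime_iff_not_dvd hp).2 h).symm
    have h2 := (ZMod.isUnit_iff_coprime x.val (p ^ k)).2 this
    rwa [ZMod.natCast_zmod_val] at h2
  refine Nat.add_le_add ?_ ?_
  · rw [← ZMod.card_units_eq_totient (p ^ k), ← Fintype.card_prod, ← Finset.card_univ]
    refine Finset.card_le_card_of_surjOn (fun z => ((z.2.1 * z.1 : (ZMod (p ^ k))ˣ), (z.1 : ZMod (p ^ k)))) ?_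
    intro z hz
    simp only [Finset.coe_filter, Finset.mem_filter, Finset.mem_univ, true_and, Set.mem_ofPred_eq] at hz
    obtain ⟨h1, h2⟩ := hz
    have h3 : IsUnit z.2 := by
      rw [← isUnit_pow_iff (n := 4) (by norm_num), ← h1]
      exact h2.pow 4
    obtain ⟨u, hu⟩ := h2
    obtain ⟨v, hv⟩ := h3
    have h4 : u ^ 4 = v ^ 4 := by
      apply Units.ext
      push_cast
      rw [hu, hv, h1]
    refine ⟨(v, ⟨u * v⁻¹, by rw [mul_pow, h4, ← mul_pow]; simp⟩), by simp, ?_⟩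
    simp [hu, hv]
  · refine Finset.card_le_card_of_injOn (fun z => (z.1.val / p, z.2.val / p)) ?_ ?_
    · intro z hz
      simp only [Finset.coe_filter, Finset.mem_filter, Finset.mem_univ, true_and, Set.mem_ofPred_eq] at hz
      obtain ⟨h1, h2⟩ := hz
      have h3 : ¬ IsUnit z.2 := by
        rw [← isUnit_pow_iff (n := 4) (by norm_num), ← h1]
        rwa [isUnit_pow_iff (by norm_num)]
      obtain ⟨x, hx⟩ := hunit _ h2
      obtain ⟨y, hy⟩ := hunit _ h3
      have e1 : p ^ k = p * p ^ (k - 1) := by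
        rw [← pow_succ']; congr 1; omega
      have hxl := ZMod.val_lt z.1
      have hyl := ZMod.val_lt z.2
      rw [hx] at hxl
      rw [hy] at hyl
      rw [e1] at hxl
      rw [e1] at hyl
      simp only [Finset.coe_filter, Finset.mem_product, Finset.mem_range, Set.mem_ofPred_eq]
      rw [hx, hy, Nat.mul_div_cancel_left _ hp.pos, Nat.mul_div_cancel_left _ hp.pos]
      refine ⟨⟨Nat.lt_of_mul_lt_mul_left hxl, Nat.lt_of_mul_lt_mul_left hyl⟩, ?_⟩
      have h5 : ((p ^ k : ℕ) : ℤ) ∣ ((z.1.val : ℤ) ^ 4 - (z.2.val : ℤ) ^ 4) := by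
        rw [← ZMod.intCast_zmod_eq_zero_iff_dvd]
        push_cast
        rw [ZMod.natCast_zmod_val, ZMod.natCast_zmod_val, h1, sub_self]
      rw [hx, hy] at h5
      rcases le_or_gt 4 k with hk4 | hk4
      · obtain ⟨m, rfl⟩ := Nat.exists_eq_add_of_le hk4
        rw [show 4 + m - 4 = m by omega]
        have h6 : ((p : ℤ) ^ 4) * (p ^ m : ℕ) ∣ ((p : ℤ) ^ 4) * ((x : ℤ) ^ 4 - (y : ℤ) ^ 4) := by
          convert h5 using 1
          · push_cast; ring
          · push_cast; ring
        exact (mul_dvd_mul_iff_left (by have := hp.pos; positivity)).1 h6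
      · rw [show k - 4 = 0 by omega]; simp
    · intro z hz w hw h
      simp only [Finset.coe_filter, Finset.mem_filter, Finset.mem_univ, true_and, Set.mem_ofPred_eq] at hz hw
      have h3 : ∀ z : ZMod (p ^ k) × ZMod (p ^ k), z.1 ^ 4 = z.2 ^ 4 → ¬ IsUnit z.1 → ¬ IsUnit z.2 := by
        intro z h1 h2
        rw [← isUnit_pow_iff (n := 4) (by norm_num), ← h1]
        rwa [isUnit_pow_iff (by norm_num)]
      simp only [Prod.mk.injEq] at h
      apply Prod.ext
      · apply ZMod.val_injective
        exact (Nat.div_left_inj (hunit _ hz.2) (hunit _ hw.2)).1 h.1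
      · apply ZMod.val_injective
        exact (Nat.div_left_inj (hunit _ (h3 _ hz.1 hz.2)) (hunit _ (h3 _ hw.1 hw.2))).1 h.2

/-- majorant for the square of the normalised complete sum -/
noncomputable def kap (q : ℕ) : ℝ := (Mc (ZMod q) : ℝ) * rc (ZMod q) / (q * q.totient)

lemma Mc_congr {A B : Type} [CommRing A] [CommRing B] (e : A ≃+* B) : Mc A = Mc B := by
  unfold Mc
  refine Nat.card_congr ((Equiv.prodCongr e.toEquiv e.toEquiv).subtypeEquiv fun p => ?_)
  simp [← map_pow]

lemma rc_congr {A B : Type} [CommRing A] [CommRing B] (e : A ≃+* B) : rc A = rc B := by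
  unfold rc
  refine Nat.card_congr ((Units.mapEquiv e.toMulEquiv).toEquiv.subtypeEquiv fun p => ?_)
  simp only [MulEquiv.toEquiv_eq_coe, EquivLike.coe_coe]
  rw [← map_pow]
  exact (MulEquiv.map_eq_one_iff _).symm

lemma Mc_prod (A B : Type) [CommRing A] [CommRing B] : Mc (A × B) = Mc A * Mc B := by
  unfold Mc
  rw [← Nat.card_prod]
  refine Nat.card_congr ⟨fun p => (⟨(p.1.1.1, p.1.2.1), congrArg Prod.fst p.2⟩, ⟨(p.1.1.2, p.1.2.2), congrArg Prod.snd p.2⟩),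
    fun z => ⟨((z.1.1.1, z.2.1.1), (z.1.1.2, z.2.1.2)), Prod.ext z.1.2 z.2.2⟩, ?_, ?_⟩
  · intro p; rfl
  · intro z; rfl

lemma rc_prod (A B : Type) [CommRing A] [CommRing B] : rc (A × B) = rc A * rc B := by
  unfold rc
  rw [← Nat.card_prod]
  have e : {u : (A × B)ˣ // u ^ 4 = 1} ≃ {u : Aˣ × Bˣ // u ^ 4 = 1} :=
    (MulEquiv.prodUnits).toEquiv.subtypeEquiv fun p => by
      simp only [MulEquiv.toEquiv_eq_coe, EquivLike.coe_coe]
      rw [← map_pow]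
      exact (MulEquiv.map_eq_one_iff _).symm
  rw [Nat.card_congr e]
  refine Nat.card_congr ⟨fun p => (⟨p.1.1, congrArg Prod.fst p.2⟩, ⟨p.1.2, congrArg Prod.snd p.2⟩),
    fun z => ⟨(z.1.1, z.2.1), Prod.ext z.1.2 z.2.2⟩, ?_, ?_⟩
  · intro p; rfl
  · intro z; rfl

lemma kap_mul {m n : ℕ} (h : m.Coprime n) : kap (m * n) = kap m * kap n := by
  unfold kap
  rw [Mc_congr (ZMod.chineseRemainder h), rc_congr (ZMod.chineseRemainder h), Mc_prod, rc_prod,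
    Nat.totient_mul h]
  push_cast
  rw [div_mul_div_comm]
  congr 1 <;> ring

lemma kap_nonneg (q : ℕ) : 0 ≤ kap q := by unfold kap; positivity

lemma kap_one : kap 1 = 1 := by
  unfold kap Mc rc
  have h1 : Nat.card {p : ZMod 1 × ZMod 1 // p.1 ^ 4 = p.2 ^ 4} = 1 := by
    rw [Nat.card_eq_one_iff_unique]
    exact ⟨inferInstance, ⟨⟨(0, 0), rfl⟩⟩⟩
  have h2 : Nat.card {u : (ZMod 1)ˣ // u ^ 4 = 1} = 1 := by
    rw [Nat.card_eq_one_iff_unique]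
    exact ⟨inferInstance, ⟨⟨1, by simp⟩⟩⟩
  rw [h1, h2]
  simp

lemma Mc_pp (p : ℕ) (hp : p.Prime) (k : ℕ) :
    (Mc (ZMod (p ^ k)) : ℝ) ≤ 9 * (k + 1) * (Real.sqrt p) ^ (3 * k) := by
  have hs : (Real.sqrt p) ^ 2 = p := Real.sq_sqrt (by positivity)
  have hs1 : 1 ≤ Real.sqrt p := by
    rw [Real.one_le_sqrt]; exact_mod_cast hp.one_lt.le
  set s := Real.sqrt p with hsdef
  induction k using Nat.strong_induction_on with
  | _ k ih =>
    rcases Nat.eq_zero_or_pos k with rfl | hk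
    · have h1 : Nat.card {p : ZMod 1 × ZMod 1 // p.1 ^ 4 = p.2 ^ 4} = 1 := by
        rw [Nat.card_eq_one_iff_unique]
        exact ⟨inferInstance, ⟨⟨(0, 0), rfl⟩⟩⟩
      have : Mc (ZMod (p ^ 0)) = 1 := h1
      rw [this]; norm_num
    · have h1 := Mc_rec p k hp hk
      have h2 : (p ^ k).totient * rc (ZMod (p ^ k)) ≤ p ^ k * 8 :=
        Nat.mul_le_mul (Nat.totient_le _) (rc_le p k hp)
      have h3 : (Mc (ZMod (p ^ k)) : ℝ) ≤ 8 * s ^ (3 * k) + MN (p ^ (k - 4)) (p ^ (k - 1)) := by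
        have : (Mc (ZMod (p ^ k)) : ℝ) ≤ (p : ℝ) ^ k * 8 + MN (p ^ (k - 4)) (p ^ (k - 1)) := by
          exact_mod_cast h1.trans (Nat.add_le_add_right h2 _)
        refine this.trans ?_
        rw [← hs, ← pow_mul, mul_comm]
        have := pow_le_pow_right₀ hs1 (show 2 * k ≤ 3 * k by omega)
        linarith
      have hk0 : (0 : ℝ) < s ^ (3 * k) := by positivity
      rcases le_or_gt k 4 with hk4 | hk4
      · have h4 : (MN (p ^ (k - 4)) (p ^ (k - 1)) : ℝ) ≤ s ^ (3 * k) := by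
          have : MN (p ^ (k - 4)) (p ^ (k - 1)) ≤ (p ^ (k - 1)) ^ 2 := by
            unfold MN
            refine (Finset.card_filter_le _ _).trans ?_
            rw [Finset.card_product, Finset.card_range, sq]
          have h5 : (MN (p ^ (k - 4)) (p ^ (k - 1)) : ℝ) ≤ ((p : ℝ) ^ (k - 1)) ^ 2 := by exact_mod_cast this
          refine h5.trans ?_
          rw [← hs, ← pow_mul, ← pow_mul]
          exact pow_le_pow_right₀ hs1 (by omega)
        have : (0 : ℝ) ≤ k * s ^ (3 * k) := by positivity
        nlinarith
      · obtain ⟨m, rfl⟩ : ∃ m, k = m + 4 := ⟨k - 4, by omega⟩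
        have hne : NeZero (p ^ m) := ⟨pow_ne_zero _ hp.ne_zero⟩
        have h4 : MN (p ^ m) (p ^ (m + 3)) ≤ (p ^ 3) ^ 2 * Mc (ZMod (p ^ m)) := by
          rw [pow_add]
          exact (MN_mul _ _ (pow_pos hp.pos _)).trans (Nat.mul_le_mul_left _ (MN_le_Mc _))
        have h5 : (MN (p ^ m) (p ^ (m + 3)) : ℝ) ≤ ((p : ℝ) ^ 3) ^ 2 * Mc (ZMod (p ^ m)) := by exact_mod_cast h4
        have h6 := ih m (by omega)
        have h7 : ((p : ℝ) ^ 3) ^ 2 * Mc (ZMod (p ^ m)) ≤ s ^ 12 * (9 * (m + 1) * s ^ (3 * m)) := by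
          rw [← hs, ← pow_mul, ← pow_mul]
          gcongr
        have h8 : s ^ 12 * (9 * (m + 1) * s ^ (3 * m)) = 9 * (m + 1) * s ^ (3 * (m + 4)) := by ring
        rw [show m + 4 - 4 = m by omega, show m + 4 - 1 = m + 3 by omega] at h3
        push_cast
        nlinarith

lemma totient_pp (p : ℕ) (hp : p.Prime) (k : ℕ) : (p : ℝ) ^ k ≤ 2 * ((p ^ k).totient : ℝ) := by
  rcases Nat.eq_zero_or_pos k with rfl | hk
  · simp
  · rw [Nat.totient_prime_pow hp hk]
    obtain ⟨m, rfl⟩ : ∃ m, k = m + 1 := ⟨k - 1, by omega⟩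
    have : (p : ℝ) ≤ 2 * ((p - 1 : ℕ) : ℝ) := by
      have := hp.two_le
      exact_mod_cast (by omega : p ≤ 2 * (p - 1))
    simp only [Nat.add_sub_cancel]
    push_cast
    rw [pow_succ]
    have h0 : (0 : ℝ) ≤ (p : ℝ) ^ m := by positivity
    nlinarith

lemma kap_pp (p : ℕ) (hp : p.Prime) (k : ℕ) :
    kap (p ^ k) ≤ 144 * (k + 1) / (Real.sqrt p) ^ k := by
  have hs : (Real.sqrt p) ^ 2 = p := Real.sq_sqrt (by positivity)
  have hp0 : (0 : ℝ) < p := by exact_mod_cast hp.pos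
  have hs0 : 0 < Real.sqrt p := Real.sqrt_pos.2 hp0
  have h1 := Mc_pp p hp k
  have h2 : (rc (ZMod (p ^ k)) : ℝ) ≤ 8 := by exact_mod_cast rc_le p k hp
  have h3 := totient_pp p hp k
  unfold kap
  have ht : (0 : ℝ) < (p ^ k).totient := by
    have : (0 : ℝ) < (p : ℝ) ^ k := by positivity
    linarith
  push_cast
  rw [div_le_div_iff₀ (by positivity) (by positivity)]
  set s := Real.sqrt p
  calc (Mc (ZMod (p ^ k)) : ℝ) * rc (ZMod (p ^ k)) * s ^ k ≤ (9 * (k + 1) * s ^ (3 * k)) * 8 * s ^ k := by gcongr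
    _ = 72 * (k + 1) * ((s ^ 2) ^ k * (s ^ 2) ^ k) := by ring
    _ = 72 * (k + 1) * ((p : ℝ) ^ k * (p : ℝ) ^ k) := by rw [hs]
    _ ≤ 72 * (k + 1) * ((p : ℝ) ^ k * (2 * ((p ^ k).totient : ℝ))) := by gcongr
    _ = _ := by ring

lemma kap_p (p : ℕ) (hp : p.Prime) : kap p ≤ 144 / p := by
  have hp0 : (0 : ℝ) < p := by exact_mod_cast hp.pos
  have h1 := Mc_rec p 1 hp le_rfl
  have h4 := rc_le p 1 hp
  have h3 := totient_pp p hp 1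
  rw [pow_one] at h1 h4 h3
  have hM : MN (p ^ (1 - 4)) (p ^ (1 - 1)) ≤ 1 := by
    unfold MN
    refine (Finset.card_filter_le _ _).trans ?_
    simp
  have h5 : Mc (ZMod p) ≤ 9 * p := by
    have : p.totient * rc (ZMod p) ≤ p * 8 := Nat.mul_le_mul (Nat.totient_le _) h4
    have := hp.pos
    omega
  have h5' : (Mc (ZMod p) : ℝ) ≤ 9 * p := by exact_mod_cast h5
  have h4' : (rc (ZMod p) : ℝ) ≤ 8 := by exact_mod_cast h4
  have ht : (0 : ℝ) < p.totient := by rw [pow_one] at h3; linarith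
  unfold kap
  rw [div_le_div_iff₀ (by positivity) (by positivity)]
  rw [pow_one] at h3
  calc (Mc (ZMod p) : ℝ) * rc (ZMod p) * p ≤ (9 * p) * 8 * p := by gcongr
    _ ≤ (9 * p) * 8 * (2 * p.totient) := by gcongr
    _ = _ := by ring

lemma mult_summable (f : ℕ → ℝ) (hf : ∀ n, 0 ≤ f n) (hf0 : f 0 = 0) (hf1 : f 1 = 1)
    (hm : ∀ {m n : ℕ}, m.Coprime n → f (m * n) = f m * f n) (b : ℕ → ℝ) (hb : Summable b)
    (s : ℝ) (hs : 1 < s)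
    (hpk : ∀ p : ℕ, p.Prime → ∀ k, f (p ^ (k + 1)) ≤ b k * (p : ℝ) ^ (-s)) : Summable f := by
  have hsp : ∀ {p : ℕ}, p.Prime → Summable fun k => f (p ^ k) := by
    intro p hp
    rw [← summable_nat_add_iff 1]
    exact Summable.of_nonneg_of_le (fun k => hf _) (hpk p hp) (hb.mul_right _)
  set B := ∑' k, b k with hB
  have hloc : ∀ p : ℕ, p.Prime → ∑' k, f (p ^ k) ≤ Real.exp (B * (p : ℝ) ^ (-s)) := by
    intro p hp
    rw [(hsp hp).tsum_eq_zero_add, pow_zero, hf1]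
    have h1 : ∑' k, f (p ^ (k + 1)) ≤ B * (p : ℝ) ^ (-s) := by
      rw [hB, ← tsum_mul_right]
      exact Summable.tsum_le_tsum (hpk p hp) ((summable_nat_add_iff 1).2 (hsp hp)) (hb.mul_right _)
    have := Real.add_one_le_exp (B * (p : ℝ) ^ (-s))
    linarith
  have hz : Summable fun n : ℕ => (n : ℝ) ^ (-s) := by
    simpa using (Real.summable_nat_rpow (p := -s)).2 (by linarith)
  have hB0 : 0 ≤ B := by
    have : ∀ k, 0 ≤ b k := by
      intro k
      have h1 := (hf _).trans (hpk 2 Nat.prime_two k)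
      exact nonneg_of_mul_nonneg_left h1 (by positivity)
    exact tsum_nonneg this
  refine summable_of_sum_range_le (c := Real.exp (B * ∑' n : ℕ, (n : ℝ) ^ (-s))) hf fun N => ?_
  have hE := EulerProduct.summable_and_hasSum_smoothNumbers_prod_primesBelow_tsum (f := f) hf1 hm
    (fun hp => by simpa [Real.norm_of_nonneg (hf _)] using hsp hp) N
  have h1 : ∑ n ∈ Finset.range N, f n ≤ ∏ p ∈ N.primesBelow, ∑' n, f (p ^ n) := by
    have h2 := sum_le_hasSum ((Finset.range N).subtype (· ∈ N.smoothNumbers)) (fun i _ => hf _) hE.2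
    refine le_trans (le_of_eq ?_) h2
    rw [Finset.sum_subtype_eq_sum_filter]
    symm
    apply Finset.sum_filter_of_ne
    intro n hn hne
    have hn0 : n ≠ 0 := by rintro rfl; exact hne hf0
    exact Nat.mem_smoothNumbers_of_lt (Nat.pos_of_ne_zero hn0) (Finset.mem_range.1 hn)
  refine h1.trans ?_
  calc ∏ p ∈ N.primesBelow, ∑' n, f (p ^ n) ≤ ∏ p ∈ N.primesBelow, Real.exp (B * (p : ℝ) ^ (-s)) := by
        refine Finset.prod_le_prod (fun p _ => tsum_nonneg fun _ => hf _) fun p hp => hloc p ?_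
        exact (Nat.mem_primesBelow.1 hp).2
    _ = Real.exp (B * ∑ p ∈ N.primesBelow, (p : ℝ) ^ (-s)) := by
        rw [← Real.exp_sum, Finset.mul_sum]
    _ ≤ _ := by
        gcongr
        exact hz.sum_le_tsum _ (fun _ _ => by positivity)

lemma kap_zero : kap 0 = 0 := by simp [kap]

lemma summable_shift (m : ℕ) (r : ℝ) (h0 : 0 < r) (h1 : r < 1) :
    Summable fun k : ℕ => ((k : ℝ) + 2) ^ m * r ^ k := by
  have h := summable_pow_mul_geometric_of_norm_lt_one (R := ℝ) m (r := r) (by rw [Real.norm_of_nonneg h0.le]; exact h1)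
  have h2 := (summable_nat_add_iff 2).2 h
  have h3 := h2.mul_right (r ^ 2)⁻¹
  refine h3.congr fun k => ?_
  push_cast
  field_simp
  ring

lemma kap_summable : Summable (fun q : ℕ => kap q * q.divisors.card * (q : ℝ) ^ (-(1 / 100) : ℝ)) := by
  have hr0 : (0 : ℝ) < (Real.sqrt 2)⁻¹ := by positivity
  have hr1 : (Real.sqrt 2)⁻¹ < 1 := by
    apply inv_lt_one_of_one_lt₀
    rw [Real.lt_sqrt] <;> norm_num
  refine mult_summable _ (fun n => ?_) ?_ ?_ ?_ (fun k => 288 * (((k : ℝ) + 2) ^ 2 * (Real.sqrt 2)⁻¹ ^ k))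
    ((summable_shift 2 _ hr0 hr1).mul_left _) (101 / 100) (by norm_num) ?_
  · have := kap_nonneg n
    positivity
  · simp [kap_zero]
  · simp [kap_one]
  · intro m n h
    rw [kap_mul h, Nat.Coprime.card_divisors_mul h]
    push_cast
    rw [Real.mul_rpow (by positivity) (by positivity)]
    ring
  · intro p hp k
    have hp0 : (0 : ℝ) < p := by exact_mod_cast hp.pos
    have hp1 : (1 : ℝ) ≤ p := by exact_mod_cast hp.one_lt.le
    have hp2 : (2 : ℝ) ≤ p := by exact_mod_cast hp.two_le
    rw [Nat.divisors_prime_pow hp, Finset.card_map, Finset.card_range]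
    rcases k with _ | j
    · have := kap_p p hp
      have h2 : (p : ℝ) ^ (-(101 / 100) : ℝ) = (p : ℝ)⁻¹ * (p : ℝ) ^ (-(1 / 100) : ℝ) := by
        rw [← Real.rpow_neg_one, ← Real.rpow_add hp0]; norm_num
      rw [h2]
      have h3 : (0 : ℝ) ≤ (p : ℝ) ^ (-(1 / 100) : ℝ) := by positivity
      norm_num only [zero_add, pow_one, pow_zero, Nat.cast_zero]
      rw [div_eq_mul_inv] at this
      calc kap p * (1 + 1 : ℕ) * (p : ℝ) ^ (-(1 / 100) : ℝ) ≤ (144 * (p : ℝ)⁻¹) * (1 + 1 : ℕ) * (p : ℝ) ^ (-(1 / 100) : ℝ) := by gcongr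
        _ = 288 * ((p : ℝ)⁻¹ * (p : ℝ) ^ (-(1 / 100) : ℝ)) := by push_cast; ring
        _ ≤ _ := by
          gcongr
          norm_num
    · have h1 := kap_pp p hp (j + 1 + 1)
      have hsq : Real.sqrt p = (p : ℝ) ^ (1 / 2 : ℝ) := Real.sqrt_eq_rpow _
      have h2 : 144 * (((j + 1 + 1 : ℕ) : ℝ) + 1) / (Real.sqrt p) ^ (j + 1 + 1) =
          144 * ((j : ℝ) + 3) * ((p : ℝ) ^ (-1 : ℝ) * (Real.sqrt p)⁻¹ ^ j) := by
        rw [Real.rpow_neg_one]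
        nth_rewrite 2 [← Real.sq_sqrt hp0.le]
        have : 0 < Real.sqrt p := Real.sqrt_pos.2 hp0
        push_cast
        rw [inv_pow]
        field_simp
        ring
      rw [h2] at h1
      have h3 : (Real.sqrt p)⁻¹ ^ j ≤ (Real.sqrt 2)⁻¹ ^ j := by
        gcongr
      have h4 : (((p ^ (j + 1 + 1) : ℕ) : ℝ)) ^ (-(1 / 100) : ℝ) ≤ (p : ℝ) ^ (-(1 / 100) : ℝ) := by
        apply Real.rpow_le_rpow_of_nonpos hp0 _ (by norm_num)
        push_cast
        exact le_self_pow₀ hp1 (by omega)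
      have h5 : (Real.sqrt 2)⁻¹ ^ j ≤ 2 * (Real.sqrt 2)⁻¹ ^ (j + 1) := by
        rw [pow_succ]
        have : 1 ≤ 2 * (Real.sqrt 2)⁻¹ := by
          rw [← div_eq_mul_inv, le_div_iff₀ (by positivity), one_mul, Real.sqrt_le_left (by norm_num)]
          norm_num
        have h0 : 0 ≤ (Real.sqrt 2)⁻¹ ^ j := by positivity
        nlinarith
      have h6 : (p : ℝ) ^ (-(101 / 100) : ℝ) = (p : ℝ) ^ (-1 : ℝ) * (p : ℝ) ^ (-(1 / 100) : ℝ) := by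
        rw [← Real.rpow_add hp0]; norm_num
      rw [h6]
      calc kap (p ^ (j + 1 + 1)) * ((j + 1 + 1 + 1 : ℕ) : ℝ) * (((p ^ (j + 1 + 1) : ℕ) : ℝ)) ^ (-(1 / 100) : ℝ)
          ≤ (144 * ((j : ℝ) + 3) * ((p : ℝ) ^ (-1 : ℝ) * (2 * (Real.sqrt 2)⁻¹ ^ (j + 1)))) * ((j + 1 + 1 + 1 : ℕ) : ℝ) * (p : ℝ) ^ (-(1 / 100) : ℝ) := by
            gcongr
            refine h1.trans ?_
            gcongr
            exact h3.trans h5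
        _ = _ := by push_cast; ring

lemma kap_le : ∃ C > (0 : ℝ), ∀ q : ℕ, 1 ≤ q → kap q ≤ C * (q : ℝ) ^ (-(99 / 200) : ℝ) := by
  obtain ⟨h, hh⟩ : ∃ h : ℕ, h = 198 := ⟨_, rfl⟩
  obtain ⟨n, hn⟩ : ∃ n : ℕ, n = 2 * (h + 2) := ⟨_, rfl⟩
  have hS : Summable (fun q : ℕ => kap q ^ n * (q : ℝ) ^ h) := by
    refine mult_summable _ (fun n => ?_) ?_ ?_ ?_ (fun k => 144 ^ n * (((k : ℝ) + 2) ^ n * (1 / 4) ^ k))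
      ((summable_shift n _ (by norm_num) (by norm_num)).mul_left _) 2 (by norm_num) ?_
    · have := kap_nonneg n
      positivity
    · simp [hh]
    · simp [kap_one]
    · intro m n' h
      rw [kap_mul h]
      push_cast
      rw [mul_pow, mul_pow]
      ring
    · intro p hp k
      have hp0 : (0 : ℝ) < p := by exact_mod_cast hp.pos
      have hp2 : (2 : ℝ) ≤ p := by exact_mod_cast hp.two_le
      have h1 := kap_pp p hp (k + 1)
      have hs : (Real.sqrt p) ^ 2 = p := Real.sq_sqrt hp0.le
      have hs0 : 0 < Real.sqrt p := Real.sqrt_pos.2 hp0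
      have h2 : (p : ℝ) ^ (-2 : ℝ) = ((p : ℝ) ^ 2)⁻¹ := by
        rw [Real.rpow_neg hp0.le]; norm_cast
      have h3 : ((p : ℝ) ^ (2 * k))⁻¹ ≤ (1 / 4) ^ k := by
        rw [pow_mul, ← inv_pow]
        gcongr
        rw [inv_le_comm₀ (by positivity) (by norm_num)]
        nlinarith
      rw [h2]
      calc kap (p ^ (k + 1)) ^ n * ((p ^ (k + 1) : ℕ) : ℝ) ^ h
          ≤ (144 * (((k + 1 : ℕ) : ℝ) + 1) / (Real.sqrt p) ^ (k + 1)) ^ n * ((p ^ (k + 1) : ℕ) : ℝ) ^ h := by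
            have := kap_nonneg (p ^ (k + 1))
            gcongr
        _ = 144 ^ n * ((k : ℝ) + 2) ^ n * (((p : ℝ) ^ (2 * k))⁻¹ * ((p : ℝ) ^ 2)⁻¹) := by
            rw [div_pow, mul_pow, ← pow_mul, show (k + 1) * n = 2 * ((h + 2) * (k + 1)) by rw [hn]; ring, pow_mul (Real.sqrt p), hs]
            push_cast
            rw [show (k : ℝ) + 1 + 1 = k + 2 by ring, ← mul_inv, ← pow_add, ← pow_mul, div_mul_eq_mul_div, ← div_eq_mul_inv,
              div_eq_div_iff (by positivity) (by positivity), mul_assoc (_ * _), ← pow_add]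
            congr 2
            ring
        _ ≤ 144 ^ n * ((k : ℝ) + 2) ^ n * ((1 / 4) ^ k * ((p : ℝ) ^ 2)⁻¹) := by gcongr
        _ = _ := by ring
  set B := ∑' q : ℕ, kap q ^ n * (q : ℝ) ^ h with hB
  have hle : ∀ q, kap q ^ n * (q : ℝ) ^ h ≤ B := fun q =>
    hS.le_tsum q (fun j _ => by have := kap_nonneg j; positivity)
  have hB1 : 1 ≤ B := by simpa [kap_one] using hle 1
  refine ⟨B, by linarith, fun q hq => ?_⟩
  have hq0 : (0 : ℝ) < q := by exact_mod_cast hq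
  have h1 : kap q ^ n ≤ (B * (q : ℝ) ^ (-(99 / 200) : ℝ)) ^ n := by
    rw [mul_pow, ← Real.rpow_natCast ((q : ℝ) ^ (-(99 / 200) : ℝ)), ← Real.rpow_mul hq0.le]
    have : (-(99 / 200) : ℝ) * (n : ℝ) = -(h : ℝ) := by rw [hn, hh]; norm_num
    rw [this, Real.rpow_neg hq0.le, Real.rpow_natCast, ← div_eq_mul_inv, le_div_iff₀ (by positivity)]
    exact (hle q).trans (le_self_pow₀ hB1 (by omega))
  exact le_of_pow_le_pow_left₀ (n := n) (by omega) (by positivity) h1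

lemma eC_add (x y : ℝ) : eC (x + y) = eC x * eC y := by
  unfold eC
  rw [← Complex.exp_add]
  congr 1
  push_cast
  ring

lemma norm_eC (x : ℝ) : ‖eC x‖ = 1 := by
  unfold eC
  rw [show (2 * Real.pi * Complex.I * x : ℂ) = ((2 * Real.pi * x : ℝ) : ℂ) * Complex.I by push_cast; ring]
  exact Complex.norm_exp_ofReal_mul_I _

lemma eC_int (n : ℤ) : eC n = 1 := by
  unfold eC
  rw [show (2 * Real.pi * Complex.I * ((n : ℝ) : ℂ) : ℂ) = n * (2 * Real.pi * Complex.I) by push_cast; ring]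
  exact Complex.exp_int_mul_two_pi_mul_I n

lemma eC_zero : eC 0 = 1 := by simpa using eC_int 0

lemma conj_eC (x : ℝ) : (starRingEnd ℂ) (eC x) = eC (-x) := by
  unfold eC
  rw [← Complex.exp_conj]
  congr 1
  simp
  left
  exact map_ofNat _ 2

lemma eC_congr {a b : ℝ} (n : ℤ) (h : a = b + n) : eC a = eC b := by
  rw [h, eC_add, eC_int, mul_one]

/-- normalised complete quartic sum at a rational -/
noncomputable def SS (r : ℚ) : ℂ := (∑ y ∈ Finset.range r.den, eC ((r : ℝ) * (y : ℝ) ^ 4)) / r.den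

lemma rat_mul_int (r : ℚ) (d : ℕ) (hd : r.den ∣ d) : ∃ n : ℤ, (r : ℝ) * d = n := by
  obtain ⟨m, rfl⟩ := hd
  refine ⟨r.num * m, ?_⟩
  have h0 : (r.den : ℝ) ≠ 0 := by exact_mod_cast r.den_ne_zero
  rw [Rat.cast_def]
  push_cast
  field_simp

lemma eC_period (r : ℚ) (d : ℕ) (hd : r.den ∣ d) (x t : ℕ) :
    eC ((r : ℝ) * ((x + d * t : ℕ) : ℝ) ^ 4) = eC ((r : ℝ) * (x : ℝ) ^ 4) := by
  obtain ⟨n, hn⟩ := rat_mul_int r d hd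
  apply eC_congr (n * (t * (4 * x ^ 3 + 6 * x ^ 2 * (d * t) + 4 * x * (d * t) ^ 2 + (d * t) ^ 3)))
  push_cast
  rw [← hn]
  ring

lemma sum_period (r : ℚ) (d : ℕ) (hd : r.den ∣ d) :
    ∑ y ∈ Finset.range d, eC ((r : ℝ) * (y : ℝ) ^ 4) = d * SS r := by
  obtain ⟨m, rfl⟩ := hd
  have h0 : (r.den : ℂ) ≠ 0 := by exact_mod_cast r.den_ne_zero
  have h1 : ∀ m : ℕ, ∑ y ∈ Finset.range (r.den * m), eC ((r : ℝ) * (y : ℝ) ^ 4) =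
      m * ∑ y ∈ Finset.range r.den, eC ((r : ℝ) * (y : ℝ) ^ 4) := by
    intro m
    induction m with
    | zero => simp
    | succ m ih =>
      rw [mul_add, mul_one, Finset.sum_range_add, ih]
      have : ∀ x ∈ Finset.range r.den, eC ((r : ℝ) * ((r.den * m + x : ℕ) : ℝ) ^ 4) = eC ((r : ℝ) * (x : ℝ) ^ 4) := by
        intro x _
        rw [add_comm, eC_period r _ dvd_rfl]
      rw [Finset.sum_congr rfl this]
      push_cast
      ring
  rw [h1]
  unfold SS
  push_cast
  field_simp

lemma sum_range_zmod (q : ℕ) [NeZero q] (F : ZMod q → ℂ) :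
    ∑ y ∈ Finset.range q, F (y : ZMod q) = ∑ y : ZMod q, F y := by
  refine Finset.sum_bij' (fun y _ => (y : ZMod q)) (fun z _ => z.val) ?_ ?_ ?_ ?_ ?_
  · simp
  · intro z _; exact Finset.mem_range.2 (ZMod.val_lt z)
  · intro y hy; exact ZMod.val_cast_of_lt (Finset.mem_range.1 hy)
  · intro z _; simp
  · intro y _; rfl

lemma stdAddChar_eC (q : ℕ) [NeZero q] (j : ℤ) : ZMod.stdAddChar (j : ZMod q) = eC ((j : ℝ) / q) := by
  rw [ZMod.stdAddChar_coe]
  unfold eC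
  congr 1
  push_cast
  ring

lemma Sq_eq (q : ℕ) [NeZero q] (a : ℤ) : Sq q a = q * SS ((a : ℚ) / q) := by
  have hden : ((a : ℚ) / q).den ∣ q := by
    have h := Rat.den_dvd a q
    exact_mod_cast h
  rw [← sum_period _ _ hden]
  unfold Sq
  rw [← sum_range_zmod]
  refine Finset.sum_congr rfl fun y _ => ?_
  have := stdAddChar_eC q (a * y ^ 4)
  push_cast at this ⊢
  rw [this]
  congr 1
  ring

lemma SS_sq_le (r : ℚ) : ‖SS r‖ ^ 2 ≤ kap r.den := by
  have : NeZero r.den := ⟨r.den_ne_zero⟩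
  have hu : IsUnit ((r.num : ℤ) : ZMod r.den) := by
    rw [ZMod.coe_int_isUnit_iff_isCoprime]
    rw [Int.isCoprime_iff_gcd_eq_one]
    have := r.reduced
    rw [Nat.Coprime, Nat.gcd_comm] at this
    simpa [Int.gcd] using this
  obtain ⟨u, hu⟩ := hu
  have h1 := Sq_bound r.den u
  rw [hu, Sq_eq, Rat.num_div_den, norm_mul, Complex.norm_natCast, mul_pow] at h1
  have hd : (0 : ℝ) < r.den := by exact_mod_cast r.pos
  have ht : (0 : ℝ) < r.den.totient := by exact_mod_cast Nat.totient_pos.2 r.pos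
  unfold kap
  rw [le_div_iff₀ (by positivity)]
  refine le_of_mul_le_mul_left ?_ hd
  linarith

lemma SS_le : ∃ C > (0 : ℝ), ∀ r : ℚ, ‖SS r‖ ^ 2 ≤ C * (r.den : ℝ) ^ (-(99 / 200) : ℝ) := by
  obtain ⟨C, hC, h⟩ := kap_le
  exact ⟨C, hC, fun r => (SS_sq_le r).trans (h _ r.pos)⟩

lemma sum_shift (L : ℕ) (Φ : ℕ → ℂ) (h : ∀ x, Φ (x + L) = Φ x) (d : ℕ) :
    ∑ x ∈ Finset.range L, Φ (x + d) = ∑ x ∈ Finset.range L, Φ x := by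
  induction d with
  | zero => simp
  | succ d ih =>
    rw [← ih]
    have h1 := Finset.sum_range_succ (fun x => Φ (x + d)) L
    have h2 := Finset.sum_range_succ' (fun x => Φ (x + d)) L
    have h3 : Φ (L + d) = Φ (0 + d) := by rw [zero_add, add_comm, h]
    rw [h1, h3] at h2
    have h4 := add_right_cancel h2
    rw [h4]
    exact Finset.sum_congr rfl fun x _ => by congr 1; ring

lemma eC_eq_one {x : ℝ} (h : eC x = 1) : ∃ n : ℤ, x = n := by
  unfold eC at h
  rw [Complex.exp_eq_one_iff] at h
  obtain ⟨n, hn⟩ := h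
  refine ⟨n, ?_⟩
  have h2 : (2 * Real.pi * Complex.I : ℂ) ≠ 0 := Complex.two_pi_I_ne_zero
  have : (x : ℂ) = (n : ℂ) := by
    apply mul_left_cancel₀ h2
    rw [hn]; ring
  exact_mod_cast this

lemma twisted_zero (r : ℚ) (L : ℕ) (hL : r.den ∣ L) (hL0 : 0 < L) (k : ℤ) (hk : k ≠ 0)
    (hkL : |k| * r.den < L) :
    ∑ x ∈ Finset.range L, eC ((k : ℝ) * x / L) * eC ((r : ℝ) * (x : ℝ) ^ 4) = 0 := by
  have hL' : (L : ℝ) ≠ 0 := by positivity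
  have hs := sum_shift L (fun x => eC ((k : ℝ) * x / L) * eC ((r : ℝ) * (x : ℝ) ^ 4)) ?_ r.den
  · have h1 : ∀ x ∈ Finset.range L, eC ((k : ℝ) * ((x + r.den : ℕ) : ℝ) / L) * eC ((r : ℝ) * ((x + r.den : ℕ) : ℝ) ^ 4) =
        eC ((k : ℝ) * r.den / L) * (eC ((k : ℝ) * x / L) * eC ((r : ℝ) * (x : ℝ) ^ 4)) := by
      intro x _
      have := eC_period r r.den dvd_rfl x 1
      rw [mul_one] at this
      rw [this, ← mul_assoc, ← eC_add ((k : ℝ) * r.den / L) ((k : ℝ) * x / L)]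
      congr 2
      push_cast
      ring
    rw [Finset.sum_congr rfl h1, ← Finset.mul_sum] at hs
    by_contra hne
    have h2 : eC ((k : ℝ) * r.den / L) = 1 := by
      apply mul_right_cancel₀ hne
      rw [hs, one_mul]
    obtain ⟨n, hn⟩ := eC_eq_one h2
    rw [div_eq_iff hL'] at hn
    have hn' : k * r.den = n * L := by exact_mod_cast hn
    have hd : (0 : ℤ) < r.den := by exact_mod_cast r.pos
    have hn0 : n ≠ 0 := by
      rintro rfl
      rw [zero_mul] at hn'
      rcases mul_eq_zero.1 hn' with h | h
      · exact hk h
      · omega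
    have h3 : |k| * r.den = |n| * L := by
      have := congrArg abs hn'
      rwa [abs_mul, abs_mul, Nat.abs_cast, Nat.abs_cast] at this
    have h4 : 1 ≤ |n| := Int.one_le_abs hn0
    have h5 : (0 : ℤ) < L := by exact_mod_cast hL0
    nlinarith
  · intro x
    have := eC_period r L hL x 1
    rw [mul_one] at this
    rw [this]
    congr 1
    apply eC_congr k
    push_cast
    field_simp

/-- Fejer type weight -/
noncomputable def fej (H L x : ℕ) : ℝ := 2 * ‖∑ h ∈ Finset.range H, eC ((h : ℝ) * x / L)‖ ^ 2 / (H : ℝ) ^ 2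

lemma fej_nonneg (H L x : ℕ) : 0 ≤ fej H L x := by unfold fej; positivity

lemma fej_ge (N H x : ℕ) (hN : 0 < N) (hH : 0 < H) (hx : x ≤ N) : 1 ≤ fej H (8 * N * H) x := by
  unfold fej
  have hH' : (0 : ℝ) < H := by exact_mod_cast hH
  have hN' : (0 : ℝ) < N := by exact_mod_cast hN
  have hx' : (x : ℝ) ≤ N := by exact_mod_cast hx
  have h1 : ∀ h ∈ Finset.range H, Real.sqrt 2 / 2 ≤ (eC ((h : ℝ) * x / (8 * N * H : ℕ))).re := by
    intro h hh
    have hh' : (h : ℝ) ≤ H := by exact_mod_cast (Finset.mem_range.1 hh).le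
    have hθ : (h : ℝ) * x / (8 * N * H : ℕ) ≤ 1 / 8 := by
      push_cast
      rw [div_le_div_iff₀ (by positivity) (by norm_num)]
      have : (h : ℝ) * x ≤ H * N := by gcongr
      linarith
    have hθ0 : 0 ≤ (h : ℝ) * x / (8 * N * H : ℕ) := by positivity
    set θ := (h : ℝ) * x / (8 * N * H : ℕ)
    have : (eC θ).re = Real.cos (2 * Real.pi * θ) := by
      unfold eC
      rw [show (2 * Real.pi * Complex.I * θ : ℂ) = ((2 * Real.pi * θ : ℝ) : ℂ) * Complex.I by push_cast; ring]
      exact Complex.exp_ofReal_mul_I_re _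
    rw [this, ← Real.cos_pi_div_four]
    have hpi := Real.pi_pos
    apply Real.cos_le_cos_of_nonneg_of_le_pi
    · positivity
    · linarith
    · nlinarith
  have h2 : (H : ℝ) * (Real.sqrt 2 / 2) ≤ ‖∑ h ∈ Finset.range H, eC ((h : ℝ) * x / (8 * N * H : ℕ))‖ := by
    refine le_trans ?_ (Complex.re_le_norm _)
    rw [Complex.re_sum]
    calc (H : ℝ) * (Real.sqrt 2 / 2) = ∑ h ∈ Finset.range H, Real.sqrt 2 / 2 := by simp
      _ ≤ _ := Finset.sum_le_sum h1
  rw [le_div_iff₀ (by positivity), one_mul]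
  have h3 : ((H : ℝ) * (Real.sqrt 2 / 2)) ^ 2 ≤ ‖∑ h ∈ Finset.range H, eC ((h : ℝ) * x / (8 * N * H : ℕ))‖ ^ 2 := by
    gcongr
  have h4 : (Real.sqrt 2) ^ 2 = 2 := Real.sq_sqrt (by norm_num)
  have h5 : ((H : ℝ) * (Real.sqrt 2 / 2)) ^ 2 = H ^ 2 / 2 := by
    rw [mul_pow, div_pow, h4]; ring
  linarith

lemma fej_sum (N : ℕ) (hN : 0 < N) (r : ℚ) (hr : r.den ≤ N) :
    ∑ x ∈ Finset.range (8 * N * N.factorial), (fej N.factorial (8 * N * N.factorial) x : ℂ) * eC ((r : ℝ) * (x : ℝ) ^ 4) =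
      16 * N * SS r := by
  set H := N.factorial with hHdef
  set L := 8 * N * H with hLdef
  have hH : 0 < H := Nat.factorial_pos N
  have hH' : (H : ℂ) ≠ 0 := by exact_mod_cast hH.ne'
  have hL0 : 0 < L := by positivity
  have hdL : r.den ∣ L := (Nat.dvd_factorial r.pos hr).mul_left _
  have h1 : ∀ x : ℕ, (fej H L x : ℂ) * eC ((r : ℝ) * (x : ℝ) ^ 4) =
      ∑ h ∈ Finset.range H, ∑ h' ∈ Finset.range H,
        2 / (H : ℂ) ^ 2 * (eC ((((h : ℤ) - (h' : ℤ) : ℤ) : ℝ) * x / L) * eC ((r : ℝ) * (x : ℝ) ^ 4)) := by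
    intro x
    unfold fej
    push_cast
    have e1 : (∑ h ∈ Finset.range H, eC ((h : ℝ) * x / L)) * (starRingEnd ℂ) (∑ h ∈ Finset.range H, eC ((h : ℝ) * x / L)) =
        ∑ h ∈ Finset.range H, ∑ h' ∈ Finset.range H, eC (((h : ℝ) - h') * x / L) := by
      rw [map_sum, Finset.sum_mul_sum]
      refine Finset.sum_congr rfl fun h _ => Finset.sum_congr rfl fun h' _ => ?_
      rw [conj_eC, ← eC_add]
      congr 1
      ring
    rw [← Complex.mul_conj', e1]
    simp_rw [← Finset.mul_sum, ← Finset.sum_mul]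
    ring
  simp_rw [h1]
  rw [Finset.sum_comm]
  have h2 : ∀ h ∈ Finset.range H, ∑ x ∈ Finset.range L, ∑ h' ∈ Finset.range H,
        2 / (H : ℂ) ^ 2 * (eC ((((h : ℤ) - (h' : ℤ) : ℤ) : ℝ) * x / L) * eC ((r : ℝ) * (x : ℝ) ^ 4)) =
        2 / (H : ℂ) ^ 2 * (L * SS r) := by
    intro h hh
    rw [Finset.sum_comm, Finset.sum_eq_single_of_mem h hh]
    · rw [← Finset.mul_sum, ← sum_period r L hdL]
      congr 1
      refine Finset.sum_congr rfl fun x _ => ?_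
      simp [eC_zero]
    · intro h' hh' hne
      rw [← Finset.mul_sum, twisted_zero r L hdL hL0, mul_zero]
      · omega
      · have a1 := Finset.mem_range.1 hh
        have a2 := Finset.mem_range.1 hh'
        have a3 : |(h : ℤ) - h'| ≤ H := by
          rw [abs_le]; constructor <;> omega
        have a4 : |(h : ℤ) - h'| * r.den ≤ H * N := by
          have : (r.den : ℤ) ≤ N := by exact_mod_cast hr
          gcongr
        have a5 : (0 : ℤ) < H * N := by positivity
        rw [hLdef]
        push_cast
        nlinarith
  rw [Finset.sum_congr rfl h2, Finset.sum_const, Finset.card_range, nsmul_eq_mul, hLdef]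
  push_cast
  field_simp
  ring

/-- duality inequality -/
lemma dual_ineq (N : ℕ) (hN : 0 < N) (R : Finset ℚ) (hR : ∀ r ∈ R, r.den ^ 2 ≤ N) (c : ℕ → ℂ)
    (hc : ∀ x, ‖c x‖ ≤ 1) (l : ℝ) (hl : 0 ≤ l)
    (hG : ∀ r ∈ R, l * N ≤ ‖∑ x ∈ Finset.range (N + 1), c x * eC ((r : ℝ) * (x : ℝ) ^ 4)‖) :
    (l * R.card) ^ 2 ≤ 32 * ∑ r ∈ R, ∑ s ∈ R, ‖SS (r - s)‖ := by
  set G : ℚ → ℂ := fun r => ∑ x ∈ Finset.range (N + 1), c x * eC ((r : ℝ) * (x : ℝ) ^ 4) with hGdef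
  have hN' : (0 : ℝ) < N := by exact_mod_cast hN
  have hb : ∀ r : ℚ, ∃ b : ℂ, ‖b‖ ≤ 1 ∧ b * G r = ‖G r‖ := by
    intro r
    by_cases h : G r = 0
    · exact ⟨1, by simp, by simp [h]⟩
    · refine ⟨(starRingEnd ℂ) (G r) / ‖G r‖, ?_, ?_⟩
      · rw [norm_div, RCLike.norm_conj]
        simp [h]
      · have : (‖G r‖ : ℂ) ≠ 0 := by simpa using h
        rw [div_mul_eq_mul_div, mul_comm, Complex.mul_conj']
        field_simp
  choose b hb1 hb2 using hb
  set B : ℕ → ℂ := fun x => ∑ r ∈ R, b r * eC ((r : ℝ) * (x : ℝ) ^ 4) with hBdef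
  have h1 : l * N * R.card ≤ ∑ x ∈ Finset.range (N + 1), ‖B x‖ := by
    have e1 : (((∑ r ∈ R, ‖G r‖ : ℝ)) : ℂ) = ∑ x ∈ Finset.range (N + 1), c x * B x := by
      push_cast
      simp_rw [← hb2, hGdef, hBdef, Finset.mul_sum]
      rw [Finset.sum_comm]
      refine Finset.sum_congr rfl fun x _ => Finset.sum_congr rfl fun r _ => ?_
      ring
    calc l * N * R.card = ∑ r ∈ R, l * N := by rw [Finset.sum_const, nsmul_eq_mul]; ring
      _ ≤ ∑ r ∈ R, ‖G r‖ := Finset.sum_le_sum hG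
      _ = ‖(((∑ r ∈ R, ‖G r‖ : ℝ)) : ℂ)‖ := by
          rw [Complex.norm_real, Real.norm_of_nonneg (by positivity)]
      _ = ‖∑ x ∈ Finset.range (N + 1), c x * B x‖ := by rw [e1]
      _ ≤ ∑ x ∈ Finset.range (N + 1), ‖c x * B x‖ := norm_sum_le _ _
      _ ≤ _ := by
          refine Finset.sum_le_sum fun x _ => ?_
          rw [norm_mul]
          exact mul_le_of_le_one_left (norm_nonneg _) (hc x)
  have h2 : (l * N * R.card) ^ 2 ≤ (N + 1) * ∑ x ∈ Finset.range (N + 1), ‖B x‖ ^ 2 := by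
    have := sq_sum_le_card_mul_sum_sq (s := Finset.range (N + 1)) (f := fun x => ‖B x‖)
    rw [Finset.card_range] at this
    push_cast at this
    refine le_trans ?_ this
    gcongr
  set H := N.factorial with hHdef
  set L := 8 * N * H with hLdef
  have hH : 0 < H := Nat.factorial_pos N
  have h3 : ∑ x ∈ Finset.range (N + 1), ‖B x‖ ^ 2 ≤ ∑ x ∈ Finset.range L, fej H L x * ‖B x‖ ^ 2 := by
    have hsub : Finset.range (N + 1) ⊆ Finset.range L := by
      apply Finset.range_subset_range.2
      have : N * 1 ≤ N * H := Nat.mul_le_mul_left _ hH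
      rw [hLdef, mul_assoc]
      omega
    refine le_trans (Finset.sum_le_sum fun x hx => ?_)
      (Finset.sum_le_sum_of_subset_of_nonneg hsub fun x _ _ => mul_nonneg (fej_nonneg _ _ _) (by positivity))
    have := fej_ge N H x hN hH (by have := Finset.mem_range.1 hx; omega)
    exact le_mul_of_one_le_left (by positivity) this
  have h4 : ((∑ x ∈ Finset.range L, fej H L x * ‖B x‖ ^ 2 : ℝ) : ℂ) =
      ∑ r ∈ R, ∑ s ∈ R, b r * (starRingEnd ℂ) (b s) * (16 * N * SS (r - s)) := by
    have e1 : ∀ r ∈ R, ∀ s ∈ R, b r * (starRingEnd ℂ) (b s) * (16 * N * SS (r - s)) =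
        ∑ x ∈ Finset.range L, b r * (starRingEnd ℂ) (b s) * ((fej H L x : ℂ) * eC (((r - s : ℚ) : ℝ) * (x : ℝ) ^ 4)) := by
      intro r hr s hs
      rw [← Finset.mul_sum, fej_sum N hN]
      have hd := Nat.le_of_dvd (by have := r.pos; have := s.pos; positivity) (Rat.sub_den_dvd r s)
      have a1 := hR r hr
      have a2 := hR s hs
      nlinarith [sq_nonneg ((r.den : ℤ) - s.den)]
    rw [Finset.sum_congr rfl fun r hr => Finset.sum_congr rfl fun s hs => e1 r hr s hs]
    rw [Finset.sum_congr rfl fun r _ => Finset.sum_comm, Finset.sum_comm]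
    push_cast
    refine Finset.sum_congr rfl fun x _ => ?_
    rw [← Complex.mul_conj', hBdef, map_sum, Finset.sum_mul_sum, Finset.mul_sum]
    refine Finset.sum_congr rfl fun r _ => ?_
    rw [Finset.mul_sum]
    refine Finset.sum_congr rfl fun s _ => ?_
    rw [map_mul, conj_eC, show ((r : ℝ) - s) * (x : ℝ) ^ 4 = r * (x : ℝ) ^ 4 + -(s * (x : ℝ) ^ 4) by ring, eC_add]
    ring
  have h5 : ∑ x ∈ Finset.range L, fej H L x * ‖B x‖ ^ 2 ≤ 16 * N * ∑ r ∈ R, ∑ s ∈ R, ‖SS (r - s)‖ := by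
    have e0 : 0 ≤ ∑ x ∈ Finset.range L, fej H L x * ‖B x‖ ^ 2 :=
      Finset.sum_nonneg fun x _ => mul_nonneg (fej_nonneg _ _ _) (by positivity)
    rw [← Real.norm_of_nonneg e0, ← Complex.norm_real, h4, Finset.mul_sum]
    refine (norm_sum_le _ _).trans (Finset.sum_le_sum fun r _ => ?_)
    rw [Finset.mul_sum]
    refine (norm_sum_le _ _).trans (Finset.sum_le_sum fun s _ => ?_)
    rw [norm_mul, norm_mul, norm_mul, RCLike.norm_conj, norm_mul, Complex.norm_natCast]
    have : ‖b r‖ * ‖b s‖ ≤ 1 := mul_le_one₀ (hb1 r) (norm_nonneg _) (hb1 s)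
    have h0 : 0 ≤ ‖(16 : ℂ)‖ * N * ‖SS (r - s)‖ := by positivity
    calc _ ≤ 1 * (‖(16 : ℂ)‖ * N * ‖SS (r - s)‖) := by gcongr
      _ = _ := by simp
  have hN1 : (1 : ℝ) ≤ N := by exact_mod_cast hN
  set S0 := ∑ r ∈ R, ∑ s ∈ R, ‖SS (r - s)‖
  have h6 : (l * N * R.card) ^ 2 ≤ (2 * N) * (16 * N * S0) := by
    refine h2.trans ?_
    have : 0 ≤ ∑ x ∈ Finset.range (N + 1), ‖B x‖ ^ 2 := by positivity
    have h7 := h3.trans h5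
    have : (N : ℝ) + 1 ≤ 2 * N := by linarith
    gcongr
  have h8 : (N : ℝ) ^ 2 * (l * R.card) ^ 2 ≤ (N : ℝ) ^ 2 * (32 * S0) := by
    calc _ = (l * N * R.card) ^ 2 := by ring
      _ ≤ _ := h6
      _ = _ := by ring
  exact le_of_mul_le_mul_left h8 (by positivity)

lemma SS_le_one (r : ℚ) : ‖SS r‖ ≤ 1 := by
  unfold SS
  have hd : (0 : ℝ) < r.den := by exact_mod_cast r.pos
  rw [norm_div, Complex.norm_natCast, div_le_one hd]
  refine (norm_sum_le _ _).trans ?_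
  simp [norm_eC]

lemma SS_decay : ∃ C : ℝ, 1 ≤ C ∧ ∀ r : ℚ, ‖SS r‖ ≤ C * (r.den : ℝ) ^ (-(1 / 8) : ℝ) := by
  obtain ⟨C, hC, h⟩ := SS_le
  refine ⟨C + 1, by linarith, fun r => ?_⟩
  have hd : (1 : ℝ) ≤ r.den := by exact_mod_cast r.pos
  have hd0 : (0 : ℝ) < r.den := by linarith
  have hx : 0 ≤ (r.den : ℝ) ^ (-(1 / 8) : ℝ) := by positivity
  apply le_of_sq_le_sq _ (by positivity)
  have h1 : (r.den : ℝ) ^ (-(99 / 200) : ℝ) ≤ ((r.den : ℝ) ^ (-(1 / 8) : ℝ)) ^ 2 := by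
    rw [← Real.rpow_natCast, ← Real.rpow_mul hd0.le]
    apply Real.rpow_le_rpow_of_exponent_le hd
    norm_num
  calc _ ≤ _ := h r
    _ ≤ C * ((r.den : ℝ) ^ (-(1 / 8) : ℝ)) ^ 2 := by gcongr
    _ ≤ (C + 1) ^ 2 * ((r.den : ℝ) ^ (-(1 / 8) : ℝ)) ^ 2 := by
        gcongr
        nlinarith
    _ = _ := by ring

lemma count_row (R : Finset ℚ) (h01 : ∀ r ∈ R, 0 ≤ r ∧ r ≤ 1) (r : ℚ) (hr : r ∈ R) (D : ℕ) (hD : 1 ≤ D) :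
    (R.filter fun s => (r - s).den ≤ D).card ≤ 3 * D ^ 2 := by
  have h : (R.filter fun s => (r - s).den ≤ D).card ≤ (Finset.Icc (-(D : ℤ)) D ×ˢ Finset.Icc 1 D).card := by
    apply Finset.card_le_card_of_injOn (fun s => ((r - s).num, (r - s).den))
    · intro s hs
      have hs := Finset.mem_filter.1 (Finset.mem_coe.1 hs)
      have a1 := h01 r hr
      have a2 := h01 s hs.1
      have hpos := (r - s).pos
      have habs : |(r - s)| ≤ 1 := by rw [abs_le]; constructor <;> linarith
      have hnum : |(r - s).num| ≤ (r - s).den := by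
        have := Rat.num_div_den (r - s)
        rw [← this, abs_div, Nat.abs_cast, div_le_one (by exact_mod_cast hpos)] at habs
        exact_mod_cast habs
      rw [abs_le] at hnum
      have := hs.2
      simp only [Finset.coe_product, Set.mem_prod, Finset.mem_coe, Finset.mem_Icc]
      omega
    · intro s _ t _ hst
      simp only [Prod.mk.injEq] at hst
      have := Rat.ext hst.1 hst.2
      linarith
  refine h.trans ?_
  rw [Finset.card_product, Int.card_Icc, Nat.card_Icc]
  have : ((D : ℤ) + 1 - -(D : ℤ)).toNat = 2 * D + 1 := by omega
  rw [this, Nat.add_sub_cancel]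
  nlinarith

lemma large_values : ∃ C > (0 : ℝ), ∀ (N : ℕ) (_ : 0 < N) (R : Finset ℚ) (_ : ∀ r ∈ R, r.den ^ 2 ≤ N)
    (_ : ∀ r ∈ R, 0 ≤ r ∧ r ≤ 1) (c : ℕ → ℂ)
    (_ : ∀ x, ‖c x‖ ≤ 1) (l : ℝ) (_ : 0 < l) (_ : l ≤ 1)
    (_ : ∀ r ∈ R, l * N ≤ ‖∑ x ∈ Finset.range (N + 1), c x * eC ((r : ℝ) * (x : ℝ) ^ 4)‖),
    (R.card : ℝ) ≤ C / l ^ 34 := by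
  obtain ⟨C1, hC1, hS⟩ := SS_decay
  refine ⟨768 * (64 * C1) ^ 16, by positivity, fun N hN R hR h01 c hc l hl hl1 hG => ?_⟩
  have hdual := dual_ineq N hN R hR c hc l hl.le hG
  set y := 64 * C1 / l ^ 2 with hy
  have hl2 : l ^ 2 ≤ 1 := pow_le_one₀ hl.le hl1
  have hy1 : 1 ≤ y := by
    rw [hy, le_div_iff₀ (by positivity)]
    linarith
  set D := ⌈y ^ 8⌉₊ with hD
  have hDge : y ^ 8 ≤ D := Nat.le_ceil _
  have hy8 : 1 ≤ y ^ 8 := one_le_pow₀ hy1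
  have hDle : (D : ℝ) ≤ 2 * y ^ 8 := by
    have := Nat.ceil_lt_add_one (a := y ^ 8) (by positivity)
    linarith
  have hD1 : 1 ≤ D := by
    have : (1 : ℝ) ≤ D := hy8.trans hDge
    exact_mod_cast this
  have hdec : ∀ d : ℕ, D ≤ d → C1 * (d : ℝ) ^ (-(1 / 8) : ℝ) ≤ l ^ 2 / 64 := by
    intro d hd
    have hd' : y ^ 8 ≤ (d : ℝ) := hDge.trans (by exact_mod_cast hd)
    have : (d : ℝ) ^ (-(1 / 8) : ℝ) ≤ (y ^ 8) ^ (-(1 / 8) : ℝ) :=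
      Real.rpow_le_rpow_of_nonpos (by positivity) hd' (by norm_num)
    have e : (y ^ 8) ^ (-(1 / 8) : ℝ) = y⁻¹ := by
      rw [← Real.rpow_natCast, ← Real.rpow_mul (by positivity), ← Real.rpow_neg_one]
      norm_num
    rw [e] at this
    calc _ ≤ C1 * y⁻¹ := by gcongr
      _ = _ := by rw [hy]; field_simp
  have hrow : ∀ r ∈ R, ∑ s ∈ R, ‖SS (r - s)‖ ≤ 3 * (D : ℝ) ^ 2 + R.card * (l ^ 2 / 64) := by
    intro r hr
    rw [← Finset.sum_filter_add_sum_filter_not R (fun s => (r - s).den ≤ D)]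
    apply add_le_add
    · calc _ ≤ ∑ s ∈ R.filter (fun s => (r - s).den ≤ D), (1 : ℝ) := Finset.sum_le_sum fun s _ => SS_le_one _
        _ = ((R.filter (fun s => (r - s).den ≤ D)).card : ℝ) := by simp
        _ ≤ _ := by exact_mod_cast count_row R h01 r hr D hD1
    · calc _ ≤ ∑ s ∈ R.filter (fun s => ¬ (r - s).den ≤ D), l ^ 2 / 64 := by
            refine Finset.sum_le_sum fun s hs => ?_
            have := (Finset.mem_filter.1 hs).2
            exact (hS _).trans (hdec _ (by omega))
        _ = ((R.filter (fun s => ¬ (r - s).den ≤ D)).card : ℝ) * (l ^ 2 / 64) := by simp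
        _ ≤ _ := by
          gcongr
          exact Finset.filter_subset _ _
  set T := (R.card : ℝ) with hT
  have hT0 : 0 ≤ T := by positivity
  have h1 : (l * T) ^ 2 ≤ 32 * (T * (3 * (D : ℝ) ^ 2 + T * (l ^ 2 / 64))) := by
    refine hdual.trans ?_
    gcongr
    calc _ ≤ ∑ r ∈ R, (3 * (D : ℝ) ^ 2 + T * (l ^ 2 / 64)) := Finset.sum_le_sum hrow
      _ = _ := by rw [Finset.sum_const, nsmul_eq_mul]
  have h2 : l ^ 2 * T ≤ 192 * (D : ℝ) ^ 2 := by
    rcases hT0.eq_or_lt with h | h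
    · rw [← h]; simp
    · apply le_of_mul_le_mul_left _ h
      nlinarith
  have h3 : (D : ℝ) ^ 2 ≤ 4 * y ^ 16 := by
    calc (D : ℝ) ^ 2 ≤ (2 * y ^ 8) ^ 2 := by gcongr
      _ = _ := by ring
  have h4 : y ^ 16 = (64 * C1) ^ 16 / l ^ 32 := by
    rw [hy, div_pow]; ring
  rw [le_div_iff₀ (by positivity)]
  calc T * l ^ 34 = (l ^ 2 * T) * l ^ 32 := by ring
    _ ≤ (192 * (4 * ((64 * C1) ^ 16 / l ^ 32))) * l ^ 32 := by
        refine mul_le_mul_of_nonneg_right ?_ (by positivity)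
        rw [← h4]; linarith
    _ = _ := by field_simp; norm_num

noncomputable def GG (N : ℕ) (c : ℕ → ℂ) (r : ℝ) : ℂ := ∑ x ∈ Finset.range (N + 1), c x * eC (r * (x : ℝ) ^ 4)

lemma sum_range_zmod_real (q : ℕ) [NeZero q] (F : ZMod q → ℝ) :
    ∑ a ∈ Finset.range q, F (a : ZMod q) = ∑ a : ZMod q, F a := by
  have := sum_range_zmod q (fun a => (F a : ℂ))
  apply Complex.ofReal_injective
  push_cast
  exact this

lemma char_eq (q : ℕ) [NeZero q] (a x : ℕ) :
    ZMod.stdAddChar ((a : ZMod q) * (x : ZMod q) ^ 4) = eC ((((a : ℚ) / q : ℚ) : ℝ) * (x : ℝ) ^ 4) := by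
  have := stdAddChar_eC q ((a * x ^ 4 : ℕ) : ℤ)
  push_cast at this
  rw [this]
  push_cast
  congr 1
  ring

lemma fourth_maj (q : ℕ) [NeZero q] (M : ℕ) (c : ℕ → ℂ) (hc : ∀ x, ‖c x‖ ≤ 1) :
    ∑ a : ZMod q, ‖∑ x ∈ Finset.range M, c x * ZMod.stdAddChar (a * (x : ZMod q) ^ 4)‖ ^ 4 ≤
    ∑ a : ZMod q, ‖∑ x ∈ Finset.range M, (ZMod.stdAddChar (a * (x : ZMod q) ^ 4) : ℂ)‖ ^ 4 := by
  have h := majorant_gen (q := q) (Finset.range M ×ˢ Finset.range M)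
    (fun p => (p.1 : ZMod q) ^ 4 + (p.2 : ZMod q) ^ 4) (fun p => c p.1 * c p.2)
    (fun p _ => by
      rw [norm_mul]
      exact mul_le_one₀ (hc _) (norm_nonneg _) (hc _))
  have key : ∀ (b : ℕ → ℂ) (a : ZMod q), ‖∑ x ∈ Finset.range M, b x * ZMod.stdAddChar (a * (x : ZMod q) ^ 4)‖ ^ 4 =
      ‖∑ p ∈ Finset.range M ×ˢ Finset.range M, (b p.1 * b p.2) * ZMod.stdAddChar (a * ((p.1 : ZMod q) ^ 4 + (p.2 : ZMod q) ^ 4))‖ ^ 2 := by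
    intro b a
    rw [Finset.sum_product, show (4 : ℕ) = 2 * 2 from rfl, pow_mul, ← norm_pow]
    congr 2
    rw [pow_two (∑ x ∈ Finset.range M, _), Finset.sum_mul_sum]
    refine Finset.sum_congr rfl fun x _ => Finset.sum_congr rfl fun y _ => ?_
    simp only
    rw [mul_add a, AddChar.map_add_eq_mul]
    ring
  have k1 := key (fun _ => 1)
  simp only [one_mul, mul_one] at k1
  simp_rw [k1, key c]
  exact h

lemma fourth_SS (q : ℕ) (hq : 0 < q) (N : ℕ) (hqN : q ≤ N) (c : ℕ → ℂ) (hc : ∀ x, ‖c x‖ ≤ 1) :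
    ∑ a ∈ Finset.range q, ‖GG N c (((a : ℚ) / q : ℚ) : ℝ)‖ ^ 4 ≤
      (2 * (N : ℝ)) ^ 4 * ∑ a ∈ Finset.range q, ‖SS ((a : ℚ) / q)‖ ^ 4 := by
  have : NeZero q := ⟨hq.ne'⟩
  set M := q * (N / q + 1) with hM
  have hM1 : N + 1 ≤ M := by
    have := Nat.lt_mul_div_succ N hq
    omega
  have hM2 : M ≤ 2 * N := by
    have := Nat.mul_div_le N q
    rw [hM, mul_add]; omega
  set c' : ℕ → ℂ := fun x => if x < N + 1 then c x else 0 with hc'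
  have h := fourth_maj q M c' (fun x => by simp only [hc']; split_ifs; exacts [hc x, by simp])
  rw [← sum_range_zmod_real, ← sum_range_zmod_real] at h
  have e1 : ∀ a ∈ Finset.range q, ‖∑ x ∈ Finset.range M, c' x * ZMod.stdAddChar ((a : ZMod q) * (x : ZMod q) ^ 4)‖ ^ 4 =
      ‖GG N c (((a : ℚ) / q : ℚ) : ℝ)‖ ^ 4 := by
    intro a _
    congr 2
    unfold GG
    rw [← Finset.sum_subset (Finset.range_subset_range.2 hM1)]
    · refine Finset.sum_congr rfl fun x hx => ?_
      rw [char_eq]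
      simp only [hc']
      rw [if_pos (Finset.mem_range.1 hx)]
    · intro x _ hx
      simp only [hc']
      rw [if_neg (by simpa using hx), zero_mul]
  have e2 : ∀ a ∈ Finset.range q, ‖∑ x ∈ Finset.range M, (ZMod.stdAddChar ((a : ZMod q) * (x : ZMod q) ^ 4) : ℂ)‖ ^ 4 =
      (M : ℝ) ^ 4 * ‖SS ((a : ℚ) / q)‖ ^ 4 := by
    intro a _
    simp_rw [char_eq]
    rw [sum_period, norm_mul, mul_pow, Complex.norm_natCast]
    refine Dvd.dvd.mul_right ?_ _
    have := Rat.den_dvd (a : ℤ) (q : ℤ)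
    rw [Int.natCast_dvd_natCast] at this
    have e : ((a : ℤ) : ℚ) / ((q : ℤ) : ℚ) = (a : ℚ) / q := by push_cast; rfl
    rw [Rat.divInt_eq_div, e] at this
    exact this
  rw [Finset.sum_congr rfl e1, Finset.sum_congr rfl e2, ← Finset.mul_sum] at h
  refine h.trans ?_
  have : (M : ℝ) ≤ 2 * N := by exact_mod_cast hM2
  gcongr

lemma den_dvd' (a q : ℕ) : ((a : ℚ) / q).den ∣ q := by
  have := Rat.den_dvd (a : ℤ) (q : ℤ)
  rw [Int.natCast_dvd_natCast] at this
  have e : ((a : ℤ) : ℚ) / ((q : ℤ) : ℚ) = (a : ℚ) / q := by push_cast; rfl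
  rw [Rat.divInt_eq_div, e] at this
  exact this

lemma card_den (q : ℕ) (hq : 0 < q) (d : ℕ) : ((Finset.range q).filter fun a : ℕ => ((a : ℚ) / q).den = d).card ≤ d := by
  conv_rhs => rw [← Finset.card_range d]
  have hq' : (0 : ℚ) < q := by exact_mod_cast hq
  apply Finset.card_le_card_of_injOn (fun a : ℕ => ((a : ℚ) / q).num.toNat)
  · intro a ha
    have ha := Finset.mem_filter.1 (Finset.mem_coe.1 ha)
    have h1 : (a : ℚ) < q := by exact_mod_cast Finset.mem_range.1 ha.1
    have h2 : (a : ℚ) / q < 1 := by rwa [div_lt_one hq']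
    have h3 : 0 ≤ ((a : ℚ) / q).num := Rat.num_nonneg.2 (by positivity)
    have h4 : ((a : ℚ) / q).num < ((a : ℚ) / q).den := by
      have h5 := Rat.num_div_den ((a : ℚ) / q)
      rw [← h5, div_lt_one (by exact_mod_cast ((a : ℚ) / q).pos)] at h2
      exact_mod_cast h2
    simp only [Finset.coe_range, Set.mem_Iio]
    have := ha.2
    omega
  · intro a ha b hb hab
    have ha := Finset.mem_filter.1 (Finset.mem_coe.1 ha)
    have hb := Finset.mem_filter.1 (Finset.mem_coe.1 hb)
    have h3 : 0 ≤ ((a : ℚ) / q).num := Rat.num_nonneg.2 (by positivity)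
    have h4 : 0 ≤ ((b : ℚ) / q).num := Rat.num_nonneg.2 (by positivity)
    simp only at hab
    have := Rat.ext (p := (a : ℚ) / q) (q := (b : ℚ) / q) (by omega) (by rw [ha.2, hb.2])
    have h5 : (a : ℚ) = b := by
      field_simp at this
      exact this
    exact_mod_cast h5

lemma sum_SS4 : ∃ C > (0 : ℝ), ∀ q : ℕ, 0 < q →
    ∑ a ∈ Finset.range q, ‖SS ((a : ℚ) / q)‖ ^ 4 ≤ C * (q.divisors.card * (q : ℝ) ^ (1 / 100 : ℝ)) := by
  obtain ⟨C, hC, h⟩ := SS_le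
  refine ⟨C ^ 2, by positivity, fun q hq => ?_⟩
  have h1 : ∀ a ∈ Finset.range q, ‖SS ((a : ℚ) / q)‖ ^ 4 ≤ C ^ 2 * ((((a : ℚ) / q).den : ℝ) ^ (-(99 / 100) : ℝ)) := by
    intro a _
    have hd : (0 : ℝ) < ((a : ℚ) / q).den := by exact_mod_cast ((a : ℚ) / q).pos
    calc ‖SS ((a : ℚ) / q)‖ ^ 4 = (‖SS ((a : ℚ) / q)‖ ^ 2) ^ 2 := by ring
      _ ≤ (C * (((a : ℚ) / q).den : ℝ) ^ (-(99 / 200) : ℝ)) ^ 2 := by gcongr; exact h _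
      _ = _ := by
        rw [mul_pow, ← Real.rpow_natCast (_ ^ _), ← Real.rpow_mul hd.le]
        norm_num
  refine (Finset.sum_le_sum h1).trans ?_
  rw [← Finset.mul_sum]
  gcongr
  rw [← Finset.sum_fiberwise_of_maps_to (t := q.divisors) (g := fun a : ℕ => ((a : ℚ) / q).den)]
  · calc _ ≤ ∑ d ∈ q.divisors, (q : ℝ) ^ (1 / 100 : ℝ) := by
          refine Finset.sum_le_sum fun d hd => ?_
          have hd0 : 0 < d := Nat.pos_of_mem_divisors hd
          have hd' : (0 : ℝ) < d := by exact_mod_cast hd0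
          have hdq : (d : ℝ) ≤ q := by exact_mod_cast Nat.divisor_le hd
          calc _ = ∑ a ∈ (Finset.range q).filter (fun a : ℕ => ((a : ℚ) / q).den = d), (d : ℝ) ^ (-(99 / 100) : ℝ) := by
                refine Finset.sum_congr rfl fun a ha => ?_
                rw [(Finset.mem_filter.1 ha).2]
            _ = ((Finset.range q).filter (fun a : ℕ => ((a : ℚ) / q).den = d)).card * (d : ℝ) ^ (-(99 / 100) : ℝ) := by
                rw [Finset.sum_const, nsmul_eq_mul]
            _ ≤ (d : ℝ) * (d : ℝ) ^ (-(99 / 100) : ℝ) := by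
                gcongr
                exact card_den q hq d
            _ = (d : ℝ) ^ (1 / 100 : ℝ) := by
                rw [← Real.rpow_one_add' hd'.le (by norm_num)]
                norm_num
            _ ≤ _ := by gcongr
      _ = _ := by rw [Finset.sum_const, nsmul_eq_mul]
  · intro a _
    exact Nat.mem_divisors.2 ⟨den_dvd' a q, hq.ne'⟩

lemma fourth_final : ∃ C > (0 : ℝ), ∀ (N : ℕ) (c : ℕ → ℂ) (_ : ∀ x, ‖c x‖ ≤ 1) (q : ℕ) (_ : 0 < q) (_ : q ≤ N)
    (R : Finset ℚ) (_ : ∀ r ∈ R, 0 ≤ r ∧ r ≤ 1) (_ : ∀ r ∈ R, r.den = q),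
    ∑ r ∈ R, ‖GG N c r‖ ^ 4 ≤ C * (N : ℝ) ^ 4 * (q.divisors.card * (q : ℝ) ^ (1 / 100 : ℝ)) := by
  obtain ⟨C, hC, h⟩ := sum_SS4
  refine ⟨32 * C, by positivity, fun N c hc q hq hqN R h01 hden => ?_⟩
  have h1 := fourth_SS q hq N hqN c hc
  have h2 := h q hq
  set E := ∑ a ∈ Finset.range q, ‖GG N c (((a : ℚ) / q : ℚ) : ℝ)‖ ^ 4 with hE
  have hE2 : ∑ r ∈ R, ‖GG N c r‖ ^ 4 ≤ 2 * E := by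
    calc ∑ r ∈ R, ‖GG N c r‖ ^ 4 ≤ ∑ r ∈ (Finset.range (q + 1)).image (fun a : ℕ => (a : ℚ) / q), ‖GG N c r‖ ^ 4 := by
          apply Finset.sum_le_sum_of_subset_of_nonneg
          · intro r hr
            refine Finset.mem_image.2 ⟨r.num.toNat, ?_, ?_⟩
            · have h3 : r.num ≤ r.den := by
                have := (h01 r hr).2
                rw [← Rat.num_div_den r, div_le_one (by exact_mod_cast r.pos)] at this
                exact_mod_cast this
              rw [hden r hr] at h3
              rw [Finset.mem_range]
              omega
            · have h3 : 0 ≤ r.num := Rat.num_nonneg.2 (h01 r hr).1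
              have h4 : ((r.num.toNat : ℤ) : ℚ) = r.num := by rw [Int.toNat_of_nonneg h3]
              have h5 : ((r.num.toNat : ℕ) : ℚ) = r.num := by exact_mod_cast h4
              rw [h5, ← hden r hr, Rat.num_div_den]
          · intros; positivity
      _ ≤ ∑ a ∈ Finset.range (q + 1), ‖GG N c (((a : ℚ) / q : ℚ) : ℝ)‖ ^ 4 := by
          apply Finset.sum_image_le_of_nonneg
          intros; positivity
      _ = E + ‖GG N c (((q : ℚ) / q : ℚ) : ℝ)‖ ^ 4 := Finset.sum_range_succ _ _
      _ = E + ‖GG N c (((0 : ℕ) / q : ℚ) : ℝ)‖ ^ 4 := by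
          congr 3
          unfold GG
          refine Finset.sum_congr rfl fun x _ => ?_
          congr 1
          apply eC_congr ((x : ℤ) ^ 4)
          have : (q : ℝ) ≠ 0 := by positivity
          push_cast
          field_simp
          simp
          ring
      _ ≤ E + E := by
          gcongr
          exact Finset.single_le_sum (f := fun a : ℕ => ‖GG N c (((a : ℚ) / q : ℚ) : ℝ)‖ ^ 4) (fun _ _ => by positivity) (Finset.mem_range.2 hq)
      _ = 2 * E := by ring
  calc _ ≤ 2 * E := hE2
    _ ≤ 2 * ((2 * (N : ℝ)) ^ 4 * (C * (q.divisors.card * (q : ℝ) ^ (1 / 100 : ℝ)))) := by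
        gcongr
        exact h1.trans (by gcongr)
    _ = _ := by ring

lemma GG_le (N : ℕ) (hN : 0 < N) (c : ℕ → ℂ) (hc : ∀ x, ‖c x‖ ≤ 1) (r : ℝ) : ‖GG N c r‖ ≤ 2 * N := by
  unfold GG
  have hN1 : (1 : ℝ) ≤ N := by exact_mod_cast hN
  calc _ ≤ ∑ x ∈ Finset.range (N + 1), ‖c x * eC (r * (x : ℝ) ^ 4)‖ := norm_sum_le _ _
    _ ≤ ∑ x ∈ Finset.range (N + 1), (1 : ℝ) := by
        refine Finset.sum_le_sum fun x _ => ?_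
        rw [norm_mul, norm_eC, mul_one]; exact hc x
    _ ≤ _ := by simp; linarith

lemma den_le_of_sq {N : ℕ} {r : ℚ} (h : r.den ^ 2 ≤ N) : r.den ≤ N := by
  have := r.pos
  nlinarith

lemma arith_small : ∃ C > (0 : ℝ), ∀ (N : ℕ) (_ : 0 < N) (R : Finset ℚ) (_ : ∀ r ∈ R, r.den ^ 2 ≤ N)
    (_ : ∀ r ∈ R, 0 ≤ r ∧ r ≤ 1) (c : ℕ → ℂ) (_ : ∀ x, ‖c x‖ ≤ 1)
    (_ : ∀ r ∈ R, ‖GG N c r‖ ≤ N * (r.den : ℝ) ^ (-(1 / 100) : ℝ)),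
    ∑ r ∈ R, ‖SS r‖ ^ 2 * ‖GG N c r‖ ^ 6 ≤ C * (N : ℝ) ^ 6 := by
  obtain ⟨C, hC, h4⟩ := fourth_final
  have hK := kap_summable
  set S := ∑' q : ℕ, kap q * q.divisors.card * (q : ℝ) ^ (-(1 / 100) : ℝ) with hS
  have hterm : ∀ q : ℕ, 0 ≤ kap q * q.divisors.card * (q : ℝ) ^ (-(1 / 100) : ℝ) := fun q =>
    mul_nonneg (mul_nonneg (kap_nonneg q) (by positivity)) (by positivity)
  have hS0 : 0 ≤ S := tsum_nonneg hterm
  refine ⟨C * (S + 1), by positivity, fun N hN R hR h01 c hc hsm => ?_⟩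
  rw [← Finset.sum_fiberwise_of_maps_to (t := Finset.range (N + 1)) (g := fun r : ℚ => r.den)]
  · calc _ ≤ ∑ q ∈ Finset.range (N + 1), C * (N : ℝ) ^ 6 * (kap q * q.divisors.card * (q : ℝ) ^ (-(1 / 100) : ℝ)) := by
          refine Finset.sum_le_sum fun q hq => ?_
          have hqN : q ≤ N := by have := Finset.mem_range.1 hq; omega
          rcases Nat.eq_zero_or_pos q with h0 | hq0
          · subst h0
            rw [Finset.filter_false_of_mem fun r _ => r.pos.ne', Finset.sum_empty]
            exact mul_nonneg (by positivity) (hterm 0)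
          have hq' : (0 : ℝ) < q := by exact_mod_cast hq0
          have hf := h4 N c hc q hq0 hqN (R.filter fun r => r.den = q)
            (fun r hr => h01 r (Finset.mem_filter.1 hr).1) (fun r hr => (Finset.mem_filter.1 hr).2)
          have hk := kap_nonneg q
          calc _ ≤ ∑ r ∈ R.filter (fun r => r.den = q), kap q * (N * (q : ℝ) ^ (-(1 / 100) : ℝ)) ^ 2 * ‖GG N c r‖ ^ 4 := by
                refine Finset.sum_le_sum fun r hr => ?_
                have hr := Finset.mem_filter.1 hr
                have a1 := SS_sq_le r
                have a2 := hsm r hr.1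
                rw [hr.2] at a1 a2
                calc _ = ‖SS r‖ ^ 2 * ‖GG N c r‖ ^ 2 * ‖GG N c r‖ ^ 4 := by ring
                  _ ≤ _ := by gcongr
            _ = kap q * (N * (q : ℝ) ^ (-(1 / 100) : ℝ)) ^ 2 * ∑ r ∈ R.filter (fun r => r.den = q), ‖GG N c r‖ ^ 4 := by
                rw [Finset.mul_sum]
            _ ≤ kap q * (N * (q : ℝ) ^ (-(1 / 100) : ℝ)) ^ 2 * (C * (N : ℝ) ^ 4 * (q.divisors.card * (q : ℝ) ^ (1 / 100 : ℝ))) := by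
                gcongr
            _ = C * (N : ℝ) ^ 6 * (kap q * q.divisors.card * (((q : ℝ) ^ (-(1 / 100) : ℝ) * (q : ℝ) ^ (1 / 100 : ℝ)) * (q : ℝ) ^ (-(1 / 100) : ℝ))) := by
                ring
            _ = _ := by
                rw [← Real.rpow_add hq']
                norm_num
      _ = C * (N : ℝ) ^ 6 * ∑ q ∈ Finset.range (N + 1), (kap q * q.divisors.card * (q : ℝ) ^ (-(1 / 100) : ℝ)) := by
          rw [Finset.mul_sum]
      _ ≤ C * (N : ℝ) ^ 6 * S := by
          gcongr
          exact hK.sum_le_tsum _ (fun q _ => hterm q)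
      _ ≤ C * (N : ℝ) ^ 6 * (S + 1) := by gcongr; linarith
      _ = _ := by ring
  · intro r hr
    have := den_le_of_sq (hR r hr)
    exact Finset.mem_range.2 (by omega)

lemma arith_large : ∃ C > (0 : ℝ), ∀ (N : ℕ) (_ : 0 < N) (R : Finset ℚ) (_ : ∀ r ∈ R, r.den ^ 2 ≤ N)
    (_ : ∀ r ∈ R, 0 ≤ r ∧ r ≤ 1) (c : ℕ → ℂ) (_ : ∀ x, ‖c x‖ ≤ 1)
    (_ : ∀ r ∈ R, N * (r.den : ℝ) ^ (-(1 / 100) : ℝ) ≤ ‖GG N c r‖),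
    ∑ r ∈ R, ‖SS r‖ ^ 2 * ‖GG N c r‖ ^ 6 ≤ C * (N : ℝ) ^ 6 := by
  obtain ⟨C, hC, hLV⟩ := large_values
  obtain ⟨C', hC', hSS⟩ := SS_le
  set ρ : ℝ := (2 : ℝ) ^ (-(31 / 200) : ℝ) with hρ
  have hρ0 : 0 ≤ ρ := by positivity
  have hρ1 : ρ < 1 := Real.rpow_lt_one_of_one_lt_of_neg (by norm_num) (by norm_num)
  have hsum := summable_geometric_of_lt_one hρ0 hρ1
  set S := ∑' j : ℕ, ρ ^ j with hS
  have hS0 : 0 ≤ S := tsum_nonneg fun j => by positivity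
  refine ⟨128 * C * C' * (S + 1), by positivity, fun N hN R hR h01 c hc hlg => ?_⟩
  rw [← Finset.sum_fiberwise_of_maps_to (t := Finset.range (N + 1)) (g := fun r : ℚ => Nat.log 2 r.den)]
  · calc _ ≤ ∑ j ∈ Finset.range (N + 1), 128 * C * C' * (N : ℝ) ^ 6 * ρ ^ j := by
          refine Finset.sum_le_sum fun j _ => ?_
          set Rj := R.filter fun r => Nat.log 2 r.den = j with hRj
          set X : ℝ := (2 : ℝ) ^ j with hX
          have hX1 : 1 ≤ X := one_le_pow₀ (by norm_num)
          have hX0 : 0 < X := by linarith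
          have hden : ∀ r ∈ Rj, X ≤ r.den ∧ (r.den : ℝ) ≤ 2 * X := by
            intro r hr
            have hr := (Finset.mem_filter.1 hr).2
            have a1 := Nat.pow_log_le_self 2 r.pos.ne'
            have a2 := (Nat.lt_pow_succ_log_self (b := 2) (by norm_num) r.den).le
            rw [hr] at a1 a2
            constructor
            · rw [hX]; exact_mod_cast a1
            · have : (r.den : ℝ) ≤ 2 ^ (j + 1) := by exact_mod_cast a2
              rw [hX, ← pow_succ']; exact this
          set l : ℝ := (2 * X) ^ (-(1 / 100) : ℝ) with hl
          have hl0 : 0 < l := by positivity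
          have hl1 : l ≤ 1 := Real.rpow_le_one_of_one_le_of_nonpos (by linarith) (by norm_num)
          have hcard := hLV N hN Rj (fun r hr => hR r (Finset.mem_filter.1 hr).1)
            (fun r hr => h01 r (Finset.mem_filter.1 hr).1) c hc l hl0 hl1 (by
              intro r hr
              refine le_trans ?_ (hlg r (Finset.mem_filter.1 hr).1)
              rw [mul_comm]
              refine mul_le_mul_of_nonneg_left ?_ (by positivity)
              exact Real.rpow_le_rpow_of_nonpos (by exact_mod_cast r.pos) (hden r hr).2 (by norm_num))
          have hl34 : (l ^ 34)⁻¹ ≤ 2 * X ^ (34 / 100 : ℝ) := by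
            rw [hl, ← Real.rpow_natCast, ← Real.rpow_mul (by positivity), ← Real.rpow_neg (by positivity)]
            rw [Real.mul_rpow (by norm_num) hX0.le]
            norm_num
            gcongr
            calc (2 : ℝ) ^ (17 / 50 : ℝ) ≤ 2 ^ (1 : ℝ) := Real.rpow_le_rpow_of_exponent_le (by norm_num) (by norm_num)
              _ = 2 := by norm_num
          calc _ ≤ ∑ r ∈ Rj, C' * X ^ (-(99 / 200) : ℝ) * (2 * (N : ℝ)) ^ 6 := by
                refine Finset.sum_le_sum fun r hr => ?_
                have b1 : ‖SS r‖ ^ 2 ≤ C' * X ^ (-(99 / 200) : ℝ) := by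
                  refine (hSS r).trans ?_
                  refine mul_le_mul_of_nonneg_left ?_ hC'.le
                  exact Real.rpow_le_rpow_of_nonpos hX0 (hden r hr).1 (by norm_num)
                have b2 := GG_le N hN c hc r
                gcongr
            _ = Rj.card * (C' * X ^ (-(99 / 200) : ℝ) * (2 * (N : ℝ)) ^ 6) := by
                rw [Finset.sum_const, nsmul_eq_mul]
            _ ≤ (C * (2 * X ^ (34 / 100 : ℝ))) * (C' * X ^ (-(99 / 200) : ℝ) * (2 * (N : ℝ)) ^ 6) := by
                refine mul_le_mul_of_nonneg_right ?_ (by positivity)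
                refine hcard.trans ?_
                rw [div_eq_mul_inv]
                gcongr
            _ = 128 * C * C' * (N : ℝ) ^ 6 * (X ^ (34 / 100 : ℝ) * X ^ (-(99 / 200) : ℝ)) := by ring
            _ = _ := by
                rw [← Real.rpow_add hX0, hX, hρ, ← Real.rpow_natCast 2 j, ← Real.rpow_natCast _ j, ← Real.rpow_mul (by norm_num), ← Real.rpow_mul (by norm_num)]
                congr 2
                ring
      _ = 128 * C * C' * (N : ℝ) ^ 6 * ∑ j ∈ Finset.range (N + 1), ρ ^ j := by
          rw [Finset.mul_sum]
      _ ≤ 128 * C * C' * (N : ℝ) ^ 6 * S := by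
          gcongr
          exact hsum.sum_le_tsum _ (fun q _ => by positivity)
      _ ≤ 128 * C * C' * (N : ℝ) ^ 6 * (S + 1) := by gcongr; linarith
      _ = _ := by ring
  · intro r hr
    have := den_le_of_sq (hR r hr)
    have h2 := Nat.log_le_self 2 r.den
    exact Finset.mem_range.2 (by omega)

lemma arith_prop : ∃ C > (0 : ℝ), ∀ (N : ℕ) (_ : 0 < N) (R : Finset ℚ) (_ : ∀ r ∈ R, r.den ^ 2 ≤ N)
    (_ : ∀ r ∈ R, 0 ≤ r ∧ r ≤ 1) (c : ℕ → ℂ) (_ : ∀ x, ‖c x‖ ≤ 1),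
    ∑ r ∈ R, ‖SS r‖ ^ 2 * ‖GG N c r‖ ^ 6 ≤ C * (N : ℝ) ^ 6 := by
  obtain ⟨C1, hC1, h1⟩ := arith_small
  obtain ⟨C2, hC2, h2⟩ := arith_large
  refine ⟨C1 + C2, by positivity, fun N hN R hR h01 c hc => ?_⟩
  rw [← Finset.sum_filter_add_sum_filter_not R (fun r => ‖GG N c r‖ ≤ N * (r.den : ℝ) ^ (-(1 / 100) : ℝ)), add_mul]
  apply add_le_add
  · exact h1 N hN _ (fun r hr => hR r (Finset.mem_filter.1 hr).1)
      (fun r hr => h01 r (Finset.mem_filter.1 hr).1) c hc (fun r hr => (Finset.mem_filter.1 hr).2)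
  · exact h2 N hN _ (fun r hr => hR r (Finset.mem_filter.1 hr).1)
      (fun r hr => h01 r (Finset.mem_filter.1 hr).1) c hc (fun r hr => (not_le.1 (Finset.mem_filter.1 hr).2).le)

lemma eC_sub_le (a b : ℝ) : ‖eC a - eC b‖ ≤ 2 * Real.pi * |a - b| := by
  have h : eC a - eC b = eC b * (eC (a - b) - 1) := by
    rw [mul_sub, ← eC_add, mul_one]
    congr 2
    ring
  rw [h, norm_mul, norm_eC, one_mul]
  have := Real.norm_exp_I_mul_ofReal_sub_one_le (x := 2 * Real.pi * (a - b))
  rw [Real.norm_eq_abs, abs_mul, abs_of_pos Real.two_pi_pos] at this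
  refine le_trans (le_of_eq ?_) this
  unfold eC
  congr 3
  push_cast
  ring

lemma eC_cont : Continuous eC := by
  unfold eC
  fun_prop

lemma eC_comp_cont (β : ℝ) : Continuous fun t : ℝ => eC (β * t ^ 4) :=
  eC_cont.comp (by fun_prop)

lemma fourth_diff (x t T q : ℝ) (hx : 0 ≤ x) (ht : 0 ≤ t) (hxT : x ≤ T) (htT : t ≤ T) (h : |x - t| ≤ q) :
    |x ^ 4 - t ^ 4| ≤ 4 * q * T ^ 3 := by
  have e : x ^ 4 - t ^ 4 = (x - t) * (x ^ 3 + x ^ 2 * t + x * t ^ 2 + t ^ 3) := by ring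
  have hT : 0 ≤ T := hx.trans hxT
  have hq : 0 ≤ q := (abs_nonneg _).trans h
  rw [e, abs_mul, abs_of_nonneg (a := x ^ 3 + x ^ 2 * t + x * t ^ 2 + t ^ 3) (by positivity)]
  calc |x - t| * (x ^ 3 + x ^ 2 * t + x * t ^ 2 + t ^ 3) ≤ q * (T ^ 3 + T ^ 2 * T + T * T ^ 2 + T ^ 3) := by gcongr
    _ = _ := by ring

lemma block_approx (r : ℚ) (β : ℝ) (u : ℕ) (T : ℝ) (hT : (u : ℝ) + r.den ≤ T) :
    ‖∑ i ∈ Finset.range r.den, eC (((r : ℝ) + β) * ((u + i : ℕ) : ℝ) ^ 4) -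
      SS r * ∫ t in (u : ℝ)..(u + r.den), eC (β * t ^ 4)‖ ≤ r.den * (8 * Real.pi * |β| * r.den * T ^ 3) := by
  set q := r.den with hq
  have hq0 : (0 : ℝ) < q := by exact_mod_cast r.pos
  have hqc : (q : ℂ) ≠ 0 := by exact_mod_cast r.pos.ne'
  set I := ∫ t in (u : ℝ)..(u + q), eC (β * t ^ 4) with hI
  have h1 : SS r = (∑ i ∈ Finset.range q, eC ((r : ℝ) * ((u + i : ℕ) : ℝ) ^ 4)) / q := by
    have := sum_shift q (fun x => eC ((r : ℝ) * (x : ℝ) ^ 4)) (fun x => by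
      have := eC_period r q dvd_rfl x 1
      rwa [mul_one] at this) u
    simp_rw [add_comm u]
    rw [this]
    rfl
  have h2 : ∑ i ∈ Finset.range q, eC (((r : ℝ) + β) * ((u + i : ℕ) : ℝ) ^ 4) - SS r * I =
      ∑ i ∈ Finset.range q, eC ((r : ℝ) * ((u + i : ℕ) : ℝ) ^ 4) * (eC (β * ((u + i : ℕ) : ℝ) ^ 4) - I / q) := by
    rw [h1]
    simp_rw [mul_sub, Finset.sum_sub_distrib, ← Finset.sum_mul, ← eC_add, ← add_mul]
    ring
  rw [h2]
  calc _ ≤ ∑ i ∈ Finset.range q, (8 * Real.pi * |β| * q * T ^ 3) := by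
        refine (norm_sum_le _ _).trans (Finset.sum_le_sum fun i hi => ?_)
        rw [norm_mul, norm_eC, one_mul]
        have hi' : (i : ℝ) ≤ q := by exact_mod_cast (Finset.mem_range.1 hi).le
        set x := ((u + i : ℕ) : ℝ) with hx
        have hxu : x = u + i := by rw [hx]; push_cast; rfl
        have e : eC (β * x ^ 4) - I / q = (∫ t in (u : ℝ)..(u + q), (eC (β * x ^ 4) - eC (β * t ^ 4))) / q := by
          rw [intervalIntegral.integral_sub (by simp) ((eC_comp_cont β).intervalIntegrable _ _), intervalIntegral.integral_const]
          rw [add_sub_cancel_left, Complex.real_smul]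
          push_cast
          field_simp
          rw [hI]
        rw [e, norm_div, Complex.norm_natCast, div_le_iff₀ hq0]
        refine (intervalIntegral.norm_integral_le_of_norm_le_const (C := 8 * Real.pi * |β| * q * T ^ 3) ?_).trans ?_
        · intro t ht
          rw [Set.uIoc_of_le (by linarith)] at ht
          have hu0 : (0 : ℝ) ≤ u := by positivity
          have hi0 : (0 : ℝ) ≤ i := by positivity
          have h4 := fourth_diff x t T q (by rw [hxu]; positivity) (by linarith [ht.1]) (by linarith) (by linarith [ht.2])
            (by rw [abs_le]; constructor <;> linarith [ht.1, ht.2])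
          refine (eC_sub_le _ _).trans ?_
          rw [← mul_sub, abs_mul]
          calc 2 * Real.pi * (|β| * |x ^ 4 - t ^ 4|) ≤ 2 * Real.pi * (|β| * (4 * q * T ^ 3)) := by
                have := Real.pi_pos
                gcongr
            _ = _ := by ring
        · rw [add_sub_cancel_left, abs_of_pos hq0]
    _ = _ := by rw [Finset.sum_const, Finset.card_range, nsmul_eq_mul]

lemma blocks_approx (r : ℚ) (β : ℝ) (m : ℕ) (T : ℝ) (K : ℕ) (hT : (m : ℝ) + K * r.den ≤ T) :
    ‖∑ i ∈ Finset.range (K * r.den), eC (((r : ℝ) + β) * ((m + i : ℕ) : ℝ) ^ 4) -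
      SS r * ∫ t in (m : ℝ)..(m + K * r.den), eC (β * t ^ 4)‖ ≤ K * (r.den * (8 * Real.pi * |β| * r.den * T ^ 3)) := by
  induction K with
  | zero => simp
  | succ K ih =>
    push_cast at hT ⊢
    have hq0 : (0 : ℝ) < r.den := by exact_mod_cast r.pos
    have ih := ih (by linarith)
    have hb := block_approx r β (m + K * r.den) T (by push_cast; linarith)
    rw [add_mul, one_mul, Finset.sum_range_add]
    have hI : (∫ t in (m : ℝ)..(m + K * r.den), eC (β * t ^ 4)) + (∫ t in ((m : ℝ) + K * r.den)..(m + (K + 1) * r.den), eC (β * t ^ 4)) =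
        ∫ t in (m : ℝ)..(m + (K + 1) * r.den), eC (β * t ^ 4) :=
      intervalIntegral.integral_add_adjacent_intervals ((eC_comp_cont β).intervalIntegrable _ _) ((eC_comp_cont β).intervalIntegrable _ _)
    rw [← hI]
    push_cast at hb ih ⊢
    rw [show (m : ℝ) + (K + 1) * r.den = m + K * r.den + r.den by ring]
    simp_rw [← add_assoc]
    rw [mul_add, add_sub_add_comm]
    refine (norm_add_le _ _).trans ?_
    rw [add_mul, one_mul]
    exact add_le_add ih hb

lemma osc_int (β A B : ℝ) (hβ : β ≠ 0) (hA : 0 < A) (hAB : A ≤ B) :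
    ‖∫ t in A..B, eC (β * t ^ 4)‖ ≤ (1 + (B - A) / A) / (|β| * A ^ 3) := by
  have hπ : (3 : ℝ) < Real.pi := Real.pi_gt_three
  set k : ℂ := 8 * Real.pi * Complex.I * β with hk
  have hk0 : k ≠ 0 := by
    rw [hk]
    simp [hβ, Real.pi_ne_zero]
  have hkn : ‖k‖ = 8 * Real.pi * |β| := by
    rw [hk]
    simp [abs_of_pos Real.pi_pos]
  have hd : ∀ t ∈ Set.uIcc A B, HasDerivAt (fun t : ℝ => eC (β * t ^ 4) * ((k * (t : ℂ) ^ 3)⁻¹)) 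
      (eC (β * t ^ 4) - 3 * eC (β * t ^ 4) / (k * (t : ℂ) ^ 4)) t := by
    intro t ht
    rw [Set.uIcc_of_le hAB] at ht
    have ht0 : 0 < t := hA.trans_le ht.1
    have htc : (t : ℂ) ≠ 0 := by exact_mod_cast ht0.ne'
    have h0 : HasDerivAt (fun t : ℝ => (t : ℂ)) 1 t := Complex.ofRealCLM.hasDerivAt
    have h1 : HasDerivAt (fun t : ℝ => eC (β * t ^ 4)) (eC (β * t ^ 4) * (k * (t : ℂ) ^ 3)) t := by
      unfold eC
      have h2 : HasDerivAt (fun t : ℝ => 2 * (Real.pi : ℂ) * Complex.I * ((β * t ^ 4 : ℝ) : ℂ)) (k * (t : ℂ) ^ 3) t := by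
        have := ((h0.fun_pow 4).const_mul (β : ℂ)).const_mul (2 * (Real.pi : ℂ) * Complex.I)
        push_cast
        refine this.congr_deriv ?_
        rw [hk]; push_cast; ring
      exact h2.cexp
    have h3 : HasDerivAt (fun t : ℝ => (k * (t : ℂ) ^ 3)⁻¹) (-(k * (3 * (t : ℂ) ^ 2)) / (k * (t : ℂ) ^ 3) ^ 2) t := by
      have := ((h0.fun_pow 3).const_mul k).fun_inv (by simp [hk0, htc])
      refine this.congr_deriv ?_
      push_cast
      ring
    refine (h1.fun_mul h3).congr_deriv ?_
    field_simp
    ring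
  have hc : ContinuousOn (fun t : ℝ => 3 * eC (β * t ^ 4) / (k * (t : ℂ) ^ 4)) (Set.uIcc A B) := by
    apply ContinuousOn.div
    · exact (continuous_const.mul (eC_comp_cont β)).continuousOn
    · fun_prop
    · intro t ht
      rw [Set.uIcc_of_le hAB] at ht
      have ht0 : 0 < t := hA.trans_le ht.1
      have htc : (t : ℂ) ≠ 0 := by exact_mod_cast ht0.ne'
      simp [hk0, htc]
  have hi1 : IntervalIntegrable (fun t : ℝ => eC (β * t ^ 4)) volume A B := (eC_comp_cont β).intervalIntegrable _ _
  have hi2 := hc.intervalIntegrable (μ := volume)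
  have hIntg := intervalIntegral.integral_eq_sub_of_hasDerivAt hd (hi1.sub hi2)
  rw [intervalIntegral.integral_sub hi1 hi2, sub_eq_iff_eq_add] at hIntg
  rw [hIntg]
  have hkpos : 0 < ‖k‖ := norm_pos_iff.2 hk0
  have hB : 0 < B := hA.trans_le hAB
  have hw : ∀ t : ℝ, A ≤ t → ‖eC (β * t ^ 4) * ((k * (t : ℂ) ^ 3)⁻¹)‖ ≤ 1 / (‖k‖ * A ^ 3) := by
    intro t ht
    have ht0 : 0 < t := hA.trans_le ht
    rw [norm_mul, norm_eC, one_mul, norm_inv, norm_mul, norm_pow, Complex.norm_real, Real.norm_of_nonneg ht0.le, one_div]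
    gcongr
  have hz : ‖∫ t in A..B, 3 * eC (β * t ^ 4) / (k * (t : ℂ) ^ 4)‖ ≤ 3 / (‖k‖ * A ^ 4) * |B - A| := by
    apply intervalIntegral.norm_integral_le_of_norm_le_const
    intro t ht
    rw [Set.uIoc_of_le hAB] at ht
    have ht0 : 0 < t := hA.trans ht.1
    rw [norm_div, norm_mul, norm_eC, mul_one, norm_mul, norm_pow, Complex.norm_real, Real.norm_of_nonneg ht0.le]
    simp only [Complex.norm_ofNat]
    have := ht.1.le
    gcongr
  have hβ' : 0 < |β| := abs_pos.2 hβ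
  have hBA : 0 ≤ B - A := by linarith
  calc _ ≤ 1 / (‖k‖ * A ^ 3) + 1 / (‖k‖ * A ^ 3) + 3 / (‖k‖ * A ^ 4) * |B - A| := by
        refine (norm_add_le _ _).trans (add_le_add ((norm_sub_le _ _).trans (add_le_add (hw B hAB) (hw A le_rfl))) hz)
    _ = (2 + 3 * ((B - A) / A)) / (‖k‖ * A ^ 3) := by
        rw [abs_of_nonneg hBA]
        field_simp
        ring
    _ ≤ (3 * (1 + (B - A) / A)) / ((3 * |β|) * A ^ 3) := by
        have : 0 ≤ (B - A) / A := by positivity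
        rw [hkn]
        gcongr
        · linarith
        · linarith
    _ = _ := by field_simp

lemma int_sum (F : ℤ → ℂ) (a b : ℤ) :
    ∑ x ∈ Finset.Icc a b, F x = ∑ i ∈ Finset.range (b + 1 - a).toNat, F (a + i) := by
  symm
  refine Finset.sum_bij' (fun i _ => a + (i : ℤ)) (fun x _ => (x - a).toNat) ?_ ?_ ?_ ?_ ?_
  · intro i hi
    have := Finset.mem_range.1 hi
    rw [Finset.mem_Icc]
    omega
  · intro x hx
    have := Finset.mem_Icc.1 hx
    rw [Finset.mem_range]
    omega
  · intro i hi
    simp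
  · intro x hx
    have := Finset.mem_Icc.1 hx
    omega
  · intros; rfl

lemma fW_approx (r : ℚ) (β : ℝ) (m L : ℕ) (P : ℝ) (hP : 2 ≤ P) (hmL : (m : ℝ) + L ≤ 2 * P)
    (hq : (r.den : ℝ) ≤ P ^ ((1 : ℝ) / 2)) (hβ : (r.den : ℝ) * |β| ≤ P ^ (-(7 : ℝ) / 2)) :
    ∃ K : ℕ, (K : ℝ) * r.den ≤ L ∧ ‖∑ i ∈ Finset.range L, eC (((r : ℝ) + β) * ((m + i : ℕ) : ℝ) ^ 4)‖ ≤
      ‖SS r‖ * ‖∫ t in (m : ℝ)..(m + K * r.den), eC (β * t ^ 4)‖ + 513 * P ^ ((1 : ℝ) / 2) := by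
  have hP0 : 0 < P := by linarith
  set q := r.den with hqd
  set K := L / q with hK
  have hKq : K * q ≤ L := Nat.div_mul_le_self L q
  have hKq' : (K : ℝ) * q ≤ L := by exact_mod_cast hKq
  refine ⟨K, hKq', ?_⟩
  have hb := blocks_approx r β m (2 * P) K (by rw [← hqd]; linarith)
  rw [← hqd] at hb
  have hL : L = K * q + L % q := (Nat.div_add_mod' L q).symm
  rw [hL, Finset.sum_range_add]
  have hrem : ‖∑ i ∈ Finset.range (L % q), eC (((r : ℝ) + β) * ((m + (K * q + i) : ℕ) : ℝ) ^ 4)‖ ≤ P ^ ((1 : ℝ) / 2) := by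
    refine (norm_sum_le _ _).trans ?_
    simp only [norm_eC, Finset.sum_const, Finset.card_range, nsmul_eq_mul, mul_one]
    refine le_trans ?_ hq
    exact_mod_cast (Nat.mod_lt L r.pos).le
  have herr : (K : ℝ) * (q * (8 * Real.pi * |β| * q * (2 * P) ^ 3)) ≤ 512 * P ^ ((1 : ℝ) / 2) := by
    have hm0 : (0 : ℝ) ≤ m := by positivity
    have hpi := Real.pi_le_four
    have hpi0 := Real.pi_pos
    calc (K : ℝ) * (q * (8 * Real.pi * |β| * q * (2 * P) ^ 3)) = 64 * Real.pi * (K * q) * (q * |β|) * P ^ 3 := by ring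
      _ ≤ 64 * 4 * (2 * P) * P ^ (-(7 : ℝ) / 2) * P ^ 3 := by
          have h1 : (K : ℝ) * q ≤ 2 * P := by linarith
          have h0 : (0 : ℝ) ≤ (K : ℝ) * q := by positivity
          have h2 : (0 : ℝ) ≤ (q : ℝ) * |β| := by positivity
          generalize (K : ℝ) * q = Z at h1 h0
          generalize (q : ℝ) * |β| = Y at hβ h2
          gcongr
      _ = 512 * (P ^ (-(7 : ℝ) / 2) * P ^ 4) := by ring
      _ = _ := by
          rw [← Real.rpow_natCast P 4, ← Real.rpow_add hP0]
          norm_num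
  set A := ∑ i ∈ Finset.range (K * q), eC (((r : ℝ) + β) * ((m + i : ℕ) : ℝ) ^ 4)
  set v := ∫ t in (m : ℝ)..(m + K * q), eC (β * t ^ 4)
  have : ‖A‖ ≤ ‖SS r * v‖ + ‖A - SS r * v‖ := by
    calc ‖A‖ = ‖SS r * v + (A - SS r * v)‖ := by congr 1; ring
      _ ≤ _ := norm_add_le _ _
  refine (norm_add_le _ _).trans ?_
  rw [norm_mul] at this
  linarith

lemma v_bound (δ : ℝ) (hδ : 0 < δ) (hδ1 : δ < 1) (P β A B : ℝ) (hP : 2 ≤ P) (hA : δ * P ≤ A) (hAB : A ≤ B)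
    (hB : B - A ≤ 2 * P) :
    ‖∫ t in A..B, eC (β * t ^ 4)‖ ^ 2 ≤ 13 / δ ^ 8 * (P ^ 2 * (1 + (P ^ 4 * β) ^ 2)⁻¹) := by
  have hP0 : 0 < P := by linarith
  set w := ‖∫ t in A..B, eC (β * t ^ 4)‖ with hw
  have h1 : w ≤ 2 * P := by
    have := intervalIntegral.norm_integral_le_of_norm_le_const (a := A) (b := B) (f := fun t : ℝ => eC (β * t ^ 4)) (C := 1)
      (fun t _ => (norm_eC _).le)
    rw [one_mul, abs_of_nonneg (by linarith)] at this
    exact this.trans hB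
  have hδP : 0 < δ * P := by positivity
  have hA0 : 0 < A := hδP.trans_le hA
  have h2 : w * (P ^ 4 * |β|) ≤ 3 / δ ^ 4 * P := by
    by_cases hβ : β = 0
    · rw [hβ]; simp; positivity
    have hβ' : 0 < |β| := abs_pos.2 hβ
    have h3 := osc_int β A B hβ hA0 hAB
    have h4 : (1 + (B - A) / A) / (|β| * A ^ 3) ≤ (3 / δ) / (|β| * (δ * P) ^ 3) := by
      have : (B - A) / A ≤ 2 * P / (δ * P) := by
        have : 0 ≤ B - A := by linarith
        gcongr
      have e : 2 * P / (δ * P) = 2 / δ := by field_simp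
      have e2 : 1 ≤ 1 / δ := by rw [le_div_iff₀ hδ]; linarith
      have e3 : 3 / δ = 1 / δ + 2 / δ := by ring
      gcongr
      rw [e3]
      linarith
    have h5 := h3.trans h4
    calc w * (P ^ 4 * |β|) ≤ (3 / δ) / (|β| * (δ * P) ^ 3) * (P ^ 4 * |β|) := by gcongr
      _ = _ := by field_simp
  have hw0 : 0 ≤ w := norm_nonneg _
  have h6 : w ^ 2 * (1 + (P ^ 4 * β) ^ 2) ≤ 13 / δ ^ 8 * P ^ 2 := by
    have e : w ^ 2 * (1 + (P ^ 4 * β) ^ 2) = w ^ 2 + (w * (P ^ 4 * |β|)) ^ 2 := by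
      rw [mul_pow w, mul_pow _ |β|, sq_abs]; ring
    have a1 : w ^ 2 ≤ (2 * P) ^ 2 := by gcongr
    have a2 : (w * (P ^ 4 * |β|)) ^ 2 ≤ (3 / δ ^ 4 * P) ^ 2 := by gcongr
    have a3 : 1 ≤ 1 / δ ^ 8 := by
      rw [le_div_iff₀ (by positivity), one_mul]
      exact pow_le_one₀ hδ.le hδ1.le
    have a4 : (3 / δ ^ 4 * P) ^ 2 = 9 * (1 / δ ^ 8) * P ^ 2 := by
      field_simp; norm_num
    have a5 : 13 / δ ^ 8 * P ^ 2 = 13 * (1 / δ ^ 8) * P ^ 2 := by ring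
    rw [e, a5]
    rw [a4] at a2
    have : 1 * P ^ 2 ≤ (1 / δ ^ 8) * P ^ 2 := by gcongr
    nlinarith
  rw [← mul_assoc, ← div_eq_mul_inv, le_div_iff₀ (by positivity)]
  exact h6

lemma fW_bound (δ : ℝ) (hδ : 0 < δ) (hδ1 : δ < 1) : ∃ C > (0 : ℝ), ∀ P : ℝ, 2 ≤ P → ∀ (r : ℚ) (β : ℝ),
    (r.den : ℝ) ≤ P ^ ((1 : ℝ) / 2) → (r.den : ℝ) * |β| ≤ P ^ (-(7 : ℝ) / 2) →
    ‖fW δ P (r + β)‖ ^ 2 ≤ C * (‖SS r‖ ^ 2 * (P ^ 2 * (1 + (P ^ 4 * β) ^ 2)⁻¹)) + C * P := by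
  refine ⟨26 / δ ^ 8 + 2 * 513 ^ 2, by positivity, fun P hP r β hq hβ => ?_⟩
  have hP0 : 0 < P := by linarith
  have hδP : 0 < δ * P := by positivity
  have hδPP : δ * P ≤ P := by nlinarith
  have hfl0 : 0 ≤ ⌊δ * P⌋ := Int.floor_nonneg.2 hδP.le
  obtain ⟨m', hm'⟩ := Int.eq_ofNat_of_zero_le hfl0
  set m := m' + 1 with hm
  set L := (⌊P⌋ + 1 - (⌊δ * P⌋ + 1)).toNat with hL
  have hfW : fW δ P (r + β) = ∑ i ∈ Finset.range L, eC (((r : ℝ) + β) * ((m + i : ℕ) : ℝ) ^ 4) := by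
    unfold fW
    rw [int_sum (fun x : ℤ => eC ((r + β) * (x : ℝ) ^ 4))]
    refine Finset.sum_congr rfl fun i _ => ?_
    rw [hm', hm]
    push_cast
    rfl
  have hm1 : δ * P ≤ m := by
    have := (Int.lt_floor_add_one (δ * P)).le
    rw [hm'] at this
    rw [hm]; push_cast; exact_mod_cast this
  have hmL : (m : ℝ) + L ≤ 2 * P := by
    have h1 := Int.floor_le P
    have hmono : ⌊δ * P⌋ ≤ ⌊P⌋ := Int.floor_le_floor hδPP
    have h2 : ((m + L : ℕ) : ℤ) = ⌊P⌋ + 1 := by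
      push_cast; omega
    have h3 : ((m + L : ℕ) : ℝ) = ⌊P⌋ + 1 := by exact_mod_cast h2
    push_cast at h3
    linarith
  obtain ⟨K, hK, hf⟩ := fW_approx r β m L P hP hmL hq hβ
  rw [← hfW] at hf
  have hKq0 : (0 : ℝ) ≤ K * r.den := by positivity
  have hm0 : (0 : ℝ) ≤ m := by positivity
  have hv := v_bound δ hδ hδ1 P β m (m + K * r.den) hP hm1 (by linarith) (by linarith)
  set v := ‖∫ t in (m : ℝ)..(m + K * r.den), eC (β * t ^ 4)‖
  set Y := P ^ 2 * (1 + (P ^ 4 * β) ^ 2)⁻¹ with hY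
  have hY0 : 0 ≤ Y := by positivity
  have hsq : (P ^ ((1 : ℝ) / 2)) ^ 2 = P := by
    rw [← Real.rpow_natCast, ← Real.rpow_mul hP0.le]; norm_num
  calc ‖fW δ P (r + β)‖ ^ 2 ≤ (‖SS r‖ * v + 513 * P ^ ((1 : ℝ) / 2)) ^ 2 := by gcongr
    _ ≤ 2 * ((‖SS r‖ * v) ^ 2 + (513 * P ^ ((1 : ℝ) / 2)) ^ 2) := add_sq_le
    _ = 2 * (‖SS r‖ ^ 2 * v ^ 2) + 2 * 513 ^ 2 * P := by
        rw [mul_pow, mul_pow 513, hsq]; ring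
    _ ≤ 2 * (‖SS r‖ ^ 2 * (13 / δ ^ 8 * Y)) + 2 * 513 ^ 2 * P := by gcongr
    _ = (26 / δ ^ 8) * (‖SS r‖ ^ 2 * Y) + 2 * 513 ^ 2 * P := by ring
    _ ≤ _ := by
        gcongr
        · norm_num
        · have : 0 < 26 / δ ^ 8 := by positivity
          linarith

noncomputable def cc (δ P R β : ℝ) (x : ℕ) : ℂ :=
  if ⌊δ * P⌋ + 1 ≤ (x : ℤ) then (if IsSmooth R (x : ℤ) then eC (β * (x : ℝ) ^ 4) else 0) else 0

lemma cc_le (δ P R β : ℝ) (x : ℕ) : ‖cc δ P R β x‖ ≤ 1 := by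
  unfold cc
  split_ifs <;> simp [norm_eC]

lemma gW_eq (δ P R r β : ℝ) (hδ : 0 < δ) (hP : 0 < P) : gW δ P R (r + β) = GG ⌊P⌋₊ (cc δ P R β) r := by
  unfold gW GG cc
  have hfl0 : 0 ≤ ⌊δ * P⌋ := Int.floor_nonneg.2 (by positivity)
  have hfl : (⌊P⌋₊ : ℤ) = ⌊P⌋ := Int.natCast_floor_eq_floor hP.le
  simp_rw [ite_mul, zero_mul]
  symm
  rw [← Finset.sum_filter]
  refine Finset.sum_bij' (fun i _ => (i : ℤ)) (fun x _ => x.toNat) ?_ ?_ ?_ ?_ ?_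
  · intro i hi
    have h1 := Finset.mem_filter.1 hi
    have h2 := Finset.mem_range.1 h1.1
    rw [Finset.mem_Icc]
    omega
  · intro x hx
    have := Finset.mem_Icc.1 hx
    rw [Finset.mem_filter, Finset.mem_range]
    omega
  · intro i hi
    simp
  · intro x hx
    have := Finset.mem_Icc.1 hx
    omega
  · intro i hi
    split_ifs
    · rw [← eC_add]
      congr 1
      push_cast
      ring
    · rfl

noncomputable def Pairs (Q : ℕ) : Finset (Σ _ : ℕ, ℕ) :=
  ((Finset.Icc 1 Q).sigma fun q => Finset.range (q + 1)).filter fun p => Nat.Coprime p.2 p.1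

noncomputable def Rs (Q : ℕ) : Finset ℚ := (Pairs Q).image fun p => (p.2 : ℚ) / p.1

lemma den_pair {Q : ℕ} {p : Σ _ : ℕ, ℕ} (hp : p ∈ Pairs Q) :
    ((p.2 : ℚ) / p.1).den = p.1 ∧ 0 ≤ (p.2 : ℚ) / p.1 ∧ (p.2 : ℚ) / p.1 ≤ 1 ∧ 1 ≤ p.1 ∧ p.1 ≤ Q := by
  unfold Pairs at hp
  obtain ⟨h1, h2⟩ := Finset.mem_filter.1 hp
  obtain ⟨h3, h4⟩ := Finset.mem_sigma.1 h1
  have h5 := Finset.mem_Icc.1 h3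
  have h6 := Finset.mem_range.1 h4
  have h7 : (0 : ℚ) < p.1 := by exact_mod_cast h5.1
  refine ⟨?_, by positivity, ?_, h5.1, h5.2⟩
  · have := Rat.den_div_eq_of_coprime (a := (p.2 : ℤ)) (b := (p.1 : ℤ)) (by omega) (by simpa using h2)
    push_cast at this
    exact_mod_cast this
  · rw [div_le_one h7]
    exact_mod_cast (by omega : p.2 ≤ p.1)

lemma Rs_spec {Q : ℕ} {r : ℚ} (hr : r ∈ Rs Q) : r.den ≤ Q ∧ 0 ≤ r ∧ r ≤ 1 := by
  obtain ⟨p, hp, rfl⟩ := Finset.mem_image.1 hr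
  obtain ⟨a, b, c, d, e⟩ := den_pair hp
  exact ⟨by omega, b, c⟩

lemma Rs_sum (Q : ℕ) : ∑ r ∈ Rs Q, (1 : ℝ) / r.den ≤ 2 * Q := by
  unfold Rs
  refine (Finset.sum_image_le_of_nonneg fun _ _ => by positivity).trans ?_
  calc _ = ∑ p ∈ Pairs Q, (1 : ℝ) / p.1 := Finset.sum_congr rfl fun p hp => by rw [(den_pair hp).1]
    _ ≤ ∑ p ∈ (Finset.Icc 1 Q).sigma fun q => Finset.range (q + 1), (1 : ℝ) / p.1 :=
        Finset.sum_le_sum_of_subset_of_nonneg (Finset.filter_subset _ _) fun _ _ _ => by positivity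
    _ = ∑ q ∈ Finset.Icc 1 Q, ∑ a ∈ Finset.range (q + 1), (1 : ℝ) / q := Finset.sum_sigma _ _ _
    _ ≤ ∑ q ∈ Finset.Icc 1 Q, (2 : ℝ) := by
        refine Finset.sum_le_sum fun q hq => ?_
        have h1 : (1 : ℝ) ≤ q := by exact_mod_cast (Finset.mem_Icc.1 hq).1
        rw [Finset.sum_const, Finset.card_range, nsmul_eq_mul, mul_one_div, div_le_iff₀ (by linarith)]
        push_cast
        linarith
    _ = _ := by simp; ring

lemma MajM_sub (P : ℝ) (hP : 2 ≤ P) : MajM P ⊆ ⋃ r ∈ Rs ⌊P ^ ((1 : ℝ) / 2)⌋₊,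
    Set.Icc ((r : ℝ) - P ^ (-(7 : ℝ) / 2) / r.den) ((r : ℝ) + P ^ (-(7 : ℝ) / 2) / r.den) := by
  rintro α ⟨_, a, q, haq, hqP, hcop, h⟩
  have hq0 : 0 < q := by
    rcases Nat.eq_zero_or_pos q with h0 | h0
    · subst h0
      have : a = 0 := by omega
      subst this
      simp at hcop
    · exact h0
  have hp : (⟨q, a⟩ : Σ _ : ℕ, ℕ) ∈ Pairs ⌊P ^ ((1 : ℝ) / 2)⌋₊ := by
    unfold Pairs
    refine Finset.mem_filter.2 ⟨Finset.mem_sigma.2 ⟨Finset.mem_Icc.2 ⟨hq0, Nat.le_floor hqP⟩, Finset.mem_range.2 ?_⟩, hcop⟩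
    simp only
    omega
  have hden := (den_pair hp).1
  simp only at hden
  have hq' : (0 : ℝ) < q := by exact_mod_cast hq0
  refine Set.mem_iUnion₂.2 ⟨(a : ℚ) / q, Finset.mem_image.2 ⟨_, hp, rfl⟩, ?_⟩
  rw [hden]
  push_cast
  rw [abs_le] at h
  constructor
  · rw [← sub_div, div_le_iff₀ hq']; linarith
  · rw [← add_div, le_div_iff₀ hq']; linarith

lemma integral_union_le {ι : Type*} (s : Finset ι) (I : ι → Set ℝ) (hI : ∀ i ∈ s, MeasurableSet (I i)) (F : ℝ → ℝ)
    (hF : ∀ x, 0 ≤ F x) (hIntg : ∀ i ∈ s, IntegrableOn F (I i)) (M : Set ℝ) (hM : M ⊆ ⋃ i ∈ s, I i) :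
    ∫ x in M, F x ≤ ∑ i ∈ s, ∫ x in I i, F x := by
  have hU : MeasurableSet (⋃ i ∈ s, I i) := Finset.measurableSet_biUnion s hI
  have hUi : IntegrableOn F (⋃ i ∈ s, I i) := integrableOn_finset_iUnion.2 hIntg
  have hsum : Integrable (fun x => ∑ i ∈ s, (I i).indicator F x) :=
    integrable_finsetSum _ fun i hi => (integrable_indicator_iff (hI i hi)).2 (hIntg i hi)
  calc ∫ x in M, F x ≤ ∫ x in ⋃ i ∈ s, I i, F x :=
        setIntegral_mono_set hUi (Filter.Eventually.of_forall hF) (Filter.Eventually.of_forall hM)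
    _ = ∫ x, (⋃ i ∈ s, I i).indicator F x := (integral_indicator hU).symm
    _ ≤ ∫ x, ∑ i ∈ s, (I i).indicator F x := by
        refine integral_mono_of_nonneg (Filter.Eventually.of_forall fun x => Set.indicator_nonneg (fun x _ => hF x) x) hsum
          (Filter.Eventually.of_forall fun x => ?_)
        by_cases hx : x ∈ ⋃ i ∈ s, I i
        · obtain ⟨i, hi, hxi⟩ := Set.mem_iUnion₂.1 hx
          simp only
          rw [Set.indicator_of_mem hx, ← Set.indicator_of_mem hxi F]
          exact Finset.single_le_sum (f := fun i => (I i).indicator F x) (fun i _ => Set.indicator_nonneg (fun x _ => hF x) x) hi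
        · simp only
          rw [Set.indicator_of_notMem hx]
          exact Finset.sum_nonneg fun i _ => Set.indicator_nonneg (fun x _ => hF x) x
    _ = ∑ i ∈ s, ∫ x, (I i).indicator F x :=
        integral_finsetSum _ fun i hi => (integrable_indicator_iff (hI i hi)).2 (hIntg i hi)
    _ = _ := Finset.sum_congr rfl fun i hi => integral_indicator (hI i hi)

lemma fW_cont (δ P : ℝ) : Continuous (fW δ P) := by
  unfold fW
  exact continuous_finsetSum _ fun x _ => eC_cont.comp (by fun_prop)

lemma gW_cont (δ P R : ℝ) : Continuous (gW δ P R) := by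
  unfold gW
  refine continuous_finsetSum _ fun x _ => ?_
  split_ifs
  · exact eC_cont.comp (by fun_prop)
  · exact continuous_const

lemma Y_int (P : ℝ) (hP : 0 < P) : Integrable (fun β : ℝ => P ^ 2 * (1 + (P ^ 4 * β) ^ 2)⁻¹) ∧
    ∫ β : ℝ, P ^ 2 * (1 + (P ^ 4 * β) ^ 2)⁻¹ = Real.pi / P ^ 2 := by
  constructor
  · exact (integrable_inv_one_add_sq.comp_mul_left' (by positivity : P ^ 4 ≠ 0)).const_mul _
  · rw [integral_const_mul, Measure.integral_comp_mul_left (fun x => (1 + x ^ 2)⁻¹), integral_univ_inv_one_add_sq,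
      abs_of_pos (by positivity), smul_eq_mul]
    field_simp

theorem stmt17 (δ : ℝ) (hδ : δ ∈ Set.Ioo (0 : ℝ) 1) :
    ∃ η > (0 : ℝ), ∃ C > (0 : ℝ), ∀ P : ℝ, 2 ≤ P → ∀ R : ℝ, 1 ≤ R → R ≤ P ^ η →
      (∫ α in MajM P, ‖fW δ P α‖ ^ 2 * ‖gW δ P R α‖ ^ 6) ≤ C * P ^ 4 := by
  obtain ⟨hδ0, hδ1⟩ := hδ
  obtain ⟨C1, hC1, hf⟩ := fW_bound δ hδ0 hδ1
  obtain ⟨C2, hC2, hA⟩ := arith_prop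
  have hpi := Real.pi_pos
  refine ⟨1, one_pos, C1 * C2 * Real.pi + 256 * C1, by positivity, fun P hP R _ _ => ?_⟩
  have hP0 : 0 < P := by linarith
  set N := ⌊P⌋₊ with hN
  have hN0 : 0 < N := Nat.floor_pos.2 (by linarith)
  have hNP : (N : ℝ) ≤ P := Nat.floor_le hP0.le
  set w := P ^ (-(7 : ℝ) / 2) with hw
  have hw0 : 0 < w := by positivity
  set Q := ⌊P ^ ((1 : ℝ) / 2)⌋₊ with hQ
  have hQP : (Q : ℝ) ≤ P ^ ((1 : ℝ) / 2) := Nat.floor_le (by positivity)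
  have hsq : (P ^ ((1 : ℝ) / 2)) ^ 2 = P := by
    rw [← Real.rpow_natCast, ← Real.rpow_mul hP0.le]; norm_num
  have hQN : Q ^ 2 ≤ N := by
    apply Nat.le_floor
    push_cast
    rw [← hsq]
    gcongr
  have hRN : ∀ r ∈ Rs Q, r.den ^ 2 ≤ N := fun r hr => (Nat.pow_le_pow_left (Rs_spec hr).1 2).trans hQN
  have hRP : ∀ r ∈ Rs Q, (r.den : ℝ) ≤ P ^ ((1 : ℝ) / 2) := fun r hr =>
    le_trans (by exact_mod_cast (Rs_spec hr).1) hQP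
  set F : ℝ → ℝ := fun α => ‖fW δ P α‖ ^ 2 * ‖gW δ P R α‖ ^ 6 with hF
  have hFc : Continuous F := ((fW_cont δ P).norm.pow 2).mul ((gW_cont δ P R).norm.pow 6)
  have hg : ∀ α, ‖gW δ P R α‖ ≤ 2 * P := by
    intro α
    have := gW_eq δ P R α 0 hδ0 hP0
    rw [add_zero] at this
    rw [this]
    exact (GG_le N hN0 _ (cc_le δ P R 0) α).trans (by linarith)
  set Y : ℝ → ℝ := fun β => P ^ 2 * (1 + (P ^ 4 * β) ^ 2)⁻¹ with hY
  obtain ⟨hYi, hYv⟩ := Y_int P hP0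
  have hY0 : ∀ β, 0 ≤ Y β := fun β => by simp only [hY]; positivity
  set h : ℚ → ℝ → ℝ := fun r β => C1 * Y β * (‖SS r‖ ^ 2 * ‖gW δ P R (r + β)‖ ^ 6) with hh
  have hh0 : ∀ r β, 0 ≤ h r β := fun r β => mul_nonneg (mul_nonneg hC1.le (hY0 β)) (by positivity)
  have hhi : ∀ r, Integrable (h r) := by
    intro r
    refine (hYi.const_mul C1).mul_bdd (c := ‖SS r‖ ^ 2 * (2 * P) ^ 6) ?_ ?_
    · refine Continuous.aestronglyMeasurable ?_
      have := gW_cont δ P R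
      fun_prop
    · refine Filter.Eventually.of_forall fun β => ?_
      rw [Real.norm_of_nonneg (by positivity)]
      gcongr
      exact hg _
  have key : ∀ r ∈ Rs Q, ∫ α in Set.Icc ((r : ℝ) - w / r.den) ((r : ℝ) + w / r.den), F α ≤
      (∫ β, h r β) + 128 * C1 * P ^ 7 * w * (1 / r.den) := by
    intro r hr
    have hd : (0 : ℝ) < r.den := by exact_mod_cast r.pos
    have hshift : Integrable (fun α : ℝ => h r (α - r)) := (hhi r).comp_sub_right (r : ℝ)
    have hvol : volume.real (Set.Icc ((r : ℝ) - w / r.den) ((r : ℝ) + w / r.den)) = 2 * w * (1 / r.den) := by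
      rw [Real.volume_real_Icc_of_le (by have : 0 < w / r.den := by positivity
                                         linarith)]
      ring
    calc _ ≤ ∫ α in Set.Icc ((r : ℝ) - w / r.den) ((r : ℝ) + w / r.den), (h r (α - r) + 64 * C1 * P ^ 7) := by
          refine setIntegral_mono_on (hFc.continuousOn.integrableOn_compact isCompact_Icc) 
            (hshift.integrableOn.add (continuous_const.continuousOn.integrableOn_compact isCompact_Icc)) measurableSet_Icc ?_
          intro α hα
          have hb := hf P hP r (α - r) (hRP r hr) (by
            have : |α - r| ≤ w / r.den := by
              rw [abs_le]; constructor <;> linarith [hα.1, hα.2]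
            rw [le_div_iff₀ hd] at this
            linarith)
          rw [add_sub_cancel] at hb
          simp only [hF, hh]
          rw [add_sub_cancel]
          have hg6 : ‖gW δ P R α‖ ^ 6 ≤ (2 * P) ^ 6 := by gcongr; exact hg α
          calc _ ≤ (C1 * (‖SS r‖ ^ 2 * Y (α - r)) + C1 * P) * ‖gW δ P R α‖ ^ 6 := by gcongr
            _ = C1 * Y (α - r) * (‖SS r‖ ^ 2 * ‖gW δ P R α‖ ^ 6) + C1 * P * ‖gW δ P R α‖ ^ 6 := by ring
            _ ≤ C1 * Y (α - r) * (‖SS r‖ ^ 2 * ‖gW δ P R α‖ ^ 6) + C1 * P * (2 * P) ^ 6 := by gcongr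
            _ = _ := by ring
      _ = (∫ α in Set.Icc ((r : ℝ) - w / r.den) ((r : ℝ) + w / r.den), h r (α - r)) + 2 * w * (1 / r.den) * (64 * C1 * P ^ 7) := by
          rw [integral_add hshift.integrableOn (continuous_const.continuousOn.integrableOn_compact isCompact_Icc),
            setIntegral_const, hvol, smul_eq_mul]
      _ ≤ (∫ α, h r (α - r)) + 2 * w * (1 / r.den) * (64 * C1 * P ^ 7) := by
          refine add_le_add ?_ le_rfl
          exact setIntegral_le_integral hshift (Filter.Eventually.of_forall fun α => hh0 r _)
      _ = _ := by
          rw [integral_sub_right_eq_self (h r)]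
          ring
  have hmain : ∑ r ∈ Rs Q, ∫ β, h r β ≤ C1 * C2 * Real.pi * P ^ 4 := by
    rw [← integral_finsetSum _ fun r _ => hhi r]
    calc _ ≤ ∫ β, C1 * (C2 * P ^ 6) * Y β := by
          refine integral_mono (integrable_finsetSum _ fun r _ => hhi r) (hYi.const_mul _) fun β => ?_
          simp only [hh]
          rw [← Finset.mul_sum]
          have := hA N hN0 (Rs Q) hRN (fun r hr => (Rs_spec hr).2) (cc δ P R β) (cc_le δ P R β)
          simp_rw [gW_eq δ P R _ β hδ0 hP0]
          have h2 : C2 * (N : ℝ) ^ 6 ≤ C2 * P ^ 6 := by gcongr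
          have h3 := mul_le_mul_of_nonneg_left (this.trans h2) (mul_nonneg hC1.le (hY0 β))
          refine h3.trans (le_of_eq ?_)
          ring
      _ = _ := by
          rw [integral_const_mul, hYv]
          field_simp
  calc ∫ α in MajM P, F α ≤ ∑ r ∈ Rs Q, ∫ α in Set.Icc ((r : ℝ) - w / r.den) ((r : ℝ) + w / r.den), F α :=
        integral_union_le _ _ (fun _ _ => measurableSet_Icc) F (fun α => by simp only [hF]; positivity)
          (fun _ _ => hFc.continuousOn.integrableOn_compact isCompact_Icc) _ (MajM_sub P hP)
    _ ≤ ∑ r ∈ Rs Q, ((∫ β, h r β) + 128 * C1 * P ^ 7 * w * (1 / r.den)) := Finset.sum_le_sum key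
    _ = ∑ r ∈ Rs Q, (∫ β, h r β) + 128 * C1 * P ^ 7 * w * ∑ r ∈ Rs Q, (1 : ℝ) / r.den := by
        rw [Finset.sum_add_distrib, Finset.mul_sum]
    _ ≤ C1 * C2 * Real.pi * P ^ 4 + 128 * C1 * P ^ 7 * w * (2 * P ^ ((1 : ℝ) / 2)) := by
        gcongr
        exact (Rs_sum Q).trans (by linarith)
    _ = C1 * C2 * Real.pi * P ^ 4 + 256 * C1 * (P ^ 7 * w * P ^ ((1 : ℝ) / 2)) := by ring
    _ = _ := by
        have : P ^ 7 * w * P ^ ((1 : ℝ) / 2) = P ^ 4 := by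
          rw [hw, ← Real.rpow_natCast P 7, ← Real.rpow_add hP0, ← Real.rpow_add hP0, ← Real.rpow_natCast P 4]
          norm_num
        rw [this]
        ring
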